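/- arXiv:1401.1670 — 10 statements merged into one kernel-verified Lean document; each statement's English description precedes it below -/
import Mathlib

section
/- Let the family f^{(m)} : ℝᵏ∖{0} → ℂ (indexed by m>0) fulfil the sm-expansion with degree D (with mass scale M>0). Then for every x ∈ ℝᵏ∖{0} the function m ↦ f^{(m)}(x) is smooth on (0,∞), the limit lim_{m↓0} f^{(m)}(x) exists, and it equals u_0(x), the m-independent coefficient at order l = 0 of the expansion. -/
/-!
With `L = 0` the expansion reads `f^{(m)}(x) = u_0(x) + r_1^{(m)}(x)`, a constant plus a smooth
function of `m`, so `f` is smooth in `m`. For the limit at any order `L`, the terms with `l ≥ 1`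
are finite sums of `m ^ l * log (m / M) ^ p` times constants, which vanish as `m ↓ 0`
(`tendsto_pow_mul_log_div_pow`), and the remainder vanishes by (E) with `ε = L + 1`, for which the
weight `(m / M) ^ (-(L + 1) + ε)` is identically `1`.
-/

noncomputable section
open Filter Topology Finset

/-- `ρ^w := exp(w log ρ)` for `ρ > 0`, `w ∈ ℂ`. -/
noncomputable def cpow (ρ : ℝ) (w : ℂ) : ℂ := Complex.exp (w * Real.log ρ)

/-- `u : ℝᵏ∖{0} → ℂ` scales almost homogeneously in `x` with degree `w`
and some finite power. -/
def AlmostHomogeneous (k : ℕ) (w : ℂ) (u : (Fin k → ℝ) → ℂ) : Prop :=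
  ∃ N : ℕ, 1 ≤ N ∧ ∃ c : ℕ → (Fin k → ℝ) → ℂ, c 0 = u ∧
    ∀ ρ : ℝ, 0 < ρ → ∀ x : Fin k → ℝ, x ≠ 0 →
      cpow ρ w * u (ρ • x) = ∑ j ∈ Finset.range N, (Real.log ρ : ℂ) ^ j * c j x

/-- A family `f^{(m)}` (indexed by `m > 0`) is almost homogeneous with degree `D`
and some finite power under the scaling `(x,m) ↦ (ρx, m/ρ)`. -/
def AlmostHomogeneousXM (k : ℕ) (D : ℂ) (f : ℝ → (Fin k → ℝ) → ℂ) : Prop :=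
  ∃ N : ℕ, 1 ≤ N ∧ ∃ c : ℕ → ℝ → (Fin k → ℝ) → ℂ, c 0 = f ∧
    ∀ ρ : ℝ, 0 < ρ → ∀ m : ℝ, 0 < m → ∀ x : Fin k → ℝ, x ≠ 0 →
      cpow ρ D * f (m / ρ) (ρ • x) = ∑ j ∈ Finset.range N, (Real.log ρ : ℂ) ^ j * c j m x

/-- The data of an sm-expansion of `f` at order `L`, with degree `D` and mass scale `M`:
the expansion identity together with properties (A), (B), (C), (D), (E). -/
def SMData (k : ℕ) (M D : ℝ) (f : ℝ → (Fin k → ℝ) → ℂ) (L : ℕ)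
    (u : ℕ → ℝ → (Fin k → ℝ) → ℂ) (r : ℝ → (Fin k → ℝ) → ℂ) : Prop :=
  -- the expansion `f^{(m)}(x) = Σ_{l=0}^L m^l u_l^{(m)}(x) + r_{L+1}^{(m)}(x)`
  (∀ m : ℝ, 0 < m → ∀ x : Fin k → ℝ, x ≠ 0 →
      f m x = ∑ l ∈ Finset.range (L + 1), (m : ℂ) ^ l * u l m x + r m x) ∧
  -- (A) `u_0^{(m)}` is independent of `m`
  (∀ m m' : ℝ, 0 < m → 0 < m' → u 0 m = u 0 m') ∧
  -- (B) and (C): `u_l^{(m)} = Σ_{p=0}^{P_l} (log (m/M))^p u_{l,p}` with `m`-independent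
  -- `u_{l,p}` scaling almost homogeneously in `x` with degree `D - l`
  (∀ l : ℕ, l ≤ L → ∃ P : ℕ, ∃ up : ℕ → (Fin k → ℝ) → ℂ,
      (∀ p : ℕ, p ≤ P → AlmostHomogeneous k ((D : ℂ) - (l : ℂ)) (up p)) ∧
      (∀ m : ℝ, 0 < m → ∀ x : Fin k → ℝ, x ≠ 0 →
        u l m x = ∑ p ∈ Finset.range (P + 1), (Real.log (m / M) : ℂ) ^ p * up p x)) ∧
  -- (D) the remainder is almost homogeneous with degree `D` under `(x,m) ↦ (ρx, m/ρ)`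
  AlmostHomogeneousXM k (D : ℂ) r ∧
  -- (E) smoothness in `m > 0` and the vanishing of `(m/M)^{-(L+1)+ε} r^{(m)}` as `m ↓ 0`
  (∀ x : Fin k → ℝ, x ≠ 0 →
      ContDiffOn ℝ (⊤ : ℕ∞) (fun m : ℝ => r m x) (Set.Ioi (0 : ℝ)) ∧
      ∀ ε : ℝ, 0 < ε →
        Filter.Tendsto (fun m : ℝ => (((m / M) ^ (-(L + 1 : ℝ) + ε) : ℝ) : ℂ) * r m x)
          (nhdsWithin 0 (Set.Ioi (0 : ℝ))) (nhds 0))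

/-- `f` fulfils the sm-expansion with degree `D` and mass scale `M`. -/
def SMExpansion (k : ℕ) (M D : ℝ) (f : ℝ → (Fin k → ℝ) → ℂ) : Prop :=
  ∀ L : ℕ, ∃ u r, SMData k M D f L u r

theorem tendsto_pow_mul_log_div_pow {M : ℝ} (hM : 0 < M) (l p : ℕ) :
    Tendsto (fun m : ℝ => m ^ (l + 1) * Real.log (m / M) ^ p) (𝓝[>] (0 : ℝ)) (𝓝 0) := by
  have hdiv : Tendsto (fun m : ℝ => m / M) (𝓝[>] (0 : ℝ)) (𝓝[>] (0 : ℝ)) := by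
    refine tendsto_nhdsWithin_iff.2 ⟨?_, ?_⟩
    · have h : Tendsto (fun m : ℝ => m / M) (𝓝 0) (𝓝 (0 / M)) := tendsto_id.div_const M
      rw [zero_div] at h
      exact h.mono_left nhdsWithin_le_nhds
    · filter_upwards [self_mem_nhdsWithin] with m hm
      exact div_pos hm hM
  have hbase : Tendsto (fun t : ℝ => t * Real.log t ^ p) (𝓝[>] (0 : ℝ)) (𝓝 0) := by
    -- substitute `t = s⁻¹` and use `log s ^ p / s → 0` at infinity
    have h := (Real.tendsto_pow_log_div_mul_add_atTop 1 0 p one_ne_zero).comp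
      tendsto_inv_nhdsGT_zero
    have h' := h.const_mul ((-1 : ℝ) ^ p)
    rw [mul_zero] at h'
    refine h'.congr fun t => ?_
    simp only [Function.comp, Real.log_inv, one_mul, add_zero, div_inv_eq_mul]
    rw [← mul_assoc, ← mul_pow, neg_one_mul, neg_neg, mul_comm]
  have hpow : Tendsto (fun m : ℝ => M * m ^ l) (𝓝[>] (0 : ℝ)) (𝓝 (M * 0 ^ l)) :=
    ((continuous_const.mul (continuous_pow l)).tendsto 0).mono_left nhdsWithin_le_nhds
  have h := hpow.mul (hbase.comp hdiv)
  rw [mul_zero] at h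
  refine h.congr fun m => ?_
  simp only [Function.comp]
  field_simp
  ring

/-- if the family `f^{(m)}` fulfils the sm-expansion with degree `D`
(mass scale `M > 0`), then for every `x ≠ 0` the map `m ↦ f^{(m)}(x)` is smooth on
`(0,∞)`, and for any sm-expansion data the limit `lim_{m↓0} f^{(m)}(x)` exists and
equals the `m`-independent coefficient `u_0(x)` at order `l = 0`. -/
theorem smExpansion_smooth_and_limit (k : ℕ) (M D : ℝ) (hM : 0 < M)
    (f : ℝ → (Fin k → ℝ) → ℂ) (hf : SMExpansion k M D f) :
    (∀ x : Fin k → ℝ, x ≠ 0 →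
        ContDiffOn ℝ (⊤ : ℕ∞) (fun m : ℝ => f m x) (Set.Ioi (0 : ℝ))) ∧
    (∀ (L : ℕ) (u : ℕ → ℝ → (Fin k → ℝ) → ℂ) (r : ℝ → (Fin k → ℝ) → ℂ),
      SMData k M D f L u r → ∀ x : Fin k → ℝ, x ≠ 0 → ∀ m₀ : ℝ, 0 < m₀ →
        Tendsto (fun m : ℝ => f m x) (𝓝[>] (0 : ℝ)) (𝓝 (u 0 m₀ x))) := by
  refine ⟨fun x hx => ?_, fun L u r h x hx m₀ hm₀ => ?_⟩
  · obtain ⟨u, r, hexp, hA, -, -, hE⟩ := hf 0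
    refine ((contDiffOn_const (c := u 0 1 x)).add (hE x hx).1).congr fun m hm => ?_
    have hm : 0 < m := hm
    simp [hexp m hm x hx, hA m 1 hm one_pos]
  · obtain ⟨hexp, hA, hB, -, hE⟩ := h
    have hr : Tendsto (fun m => r m x) (𝓝[>] (0 : ℝ)) (𝓝 0) := by
      have h := (hE x hx).2 (L + 1) (by positivity)
      simpa using h
    have hterm : ∀ l ∈ Finset.range L,
        Tendsto (fun m : ℝ => (m : ℂ) ^ (l + 1) * u (l + 1) m x) (𝓝[>] (0 : ℝ)) (𝓝 0) := by
      intro l hl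
      obtain ⟨P, up, -, hu⟩ := hB (l + 1) (Finset.mem_range.1 hl)
      have hsum : Tendsto (fun m : ℝ => ∑ p ∈ Finset.range (P + 1),
          ((m ^ (l + 1) * Real.log (m / M) ^ p : ℝ) : ℂ) * up p x) (𝓝[>] (0 : ℝ))
          (𝓝 (∑ p ∈ Finset.range (P + 1), ((0 : ℝ) : ℂ) * up p x)) :=
        tendsto_finsetSum _ fun p _ =>
          ((Complex.continuous_ofReal.tendsto 0).comp
            (tendsto_pow_mul_log_div_pow hM l p)).mul_const _
      simp only [Complex.ofReal_zero, zero_mul, Finset.sum_const_zero] at hsum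
      refine hsum.congr' ?_
      filter_upwards [self_mem_nhdsWithin] with m hm
      rw [hu m hm x hx, Finset.mul_sum]
      refine Finset.sum_congr rfl fun p _ => ?_
      push_cast
      ring
    have hlim := ((tendsto_finsetSum _ hterm).add_const (u 0 m₀ x)).add hr
    simp only [Finset.sum_const_zero, zero_add, add_zero] at hlim
    refine hlim.congr' ?_
    filter_upwards [self_mem_nhdsWithin] with m hm
    rw [hexp m hm x hx, Finset.sum_range_succ', hA m m₀ hm hm₀]
    simp
end
end

section
/- Let the family f^{(m)} : ℝᵏ∖{0} → ℂ (indexed by m>0) fulfil the sm-expansion with degree D (with mass scale M>0). Then f^{(m)} is almost homogeneous with degree D and some finite power under the scaling (x,m) ↦ (ρx, m/ρ): there exist N ∈ ℕ and families c_j^{(m)} : ℝᵏ∖{0} → ℂ (0 ≤ j ≤ N−1) with c_0^{(m)} = f^{(m)} such that ρ^D f^{(m/ρ)}(ρx) = Σ_{j=0}^{N−1} (log ρ)^j c_j^{(m)}(x) for all ρ>0, m>0, x≠0. -/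
/-!
The expansion at order `L = 0` suffices. It reads `f^{(m)} = u_0 + r_1^{(m)}`, where `u_0` does not
depend on `m`; evaluating its logarithmic expansion at `m = M` gives `u_0 = u_{0,0}`, which scales
almost homogeneously in `x` with degree `D`. As `u_0` is `m`-independent, this is also almost
homogeneity of degree `D` under `(x,m) ↦ (ρx, m/ρ)`. The remainder has the same property by (D),
and the two polynomials in `log ρ` add up.
-/

noncomputable section
open Filter Topology Finset

/-- Padding the coefficients by zero lets polynomials of different lengths be added. -/
lemma sum_range_pad (t : ℂ) (a : ℕ → ℂ) {n N : ℕ} (h : n ≤ N) :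
    ∑ j ∈ Finset.range N, t ^ j * (if j < n then a j else 0)
      = ∑ j ∈ Finset.range n, t ^ j * a j := by
  symm
  rw [← Finset.sum_subset (Finset.range_mono h)]
  · refine Finset.sum_congr rfl fun j hj => ?_
    rw [if_pos (Finset.mem_range.1 hj)]
  · intro j _ hj
    rw [if_neg (by simpa using hj), mul_zero]

/-- if the family `f^{(m)}` fulfils the sm-expansion with degree `D`
(mass scale `M > 0`), then `f^{(m)}` is almost homogeneous with degree `D` and some
finite power under the scaling `(x,m) ↦ (ρx, m/ρ)`. -/
theorem smExpansion_almostHomogeneous (k : ℕ) (M D : ℝ) (hM : 0 < M)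
    (f : ℝ → (Fin k → ℝ) → ℂ) (hf : SMExpansion k M D f) :
    AlmostHomogeneousXM k (D : ℂ) f := by
  obtain ⟨u, r, hexp, hA, hBC, ⟨N₂, hN₂, c₂, hc₂, h₂⟩, -⟩ := hf 0
  obtain ⟨P, up, hup, hu⟩ := hBC 0 le_rfl
  obtain ⟨N₁, hN₁, c₁, hc₁, h₁⟩ := hup 0 (Nat.zero_le _)
  -- At `m = M` the logarithm vanishes, so only the `p = 0` term survives.
  have hu0 : ∀ m : ℝ, 0 < m → ∀ x : Fin k → ℝ, x ≠ 0 → u 0 m x = up 0 x := by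
    intro m hm x hx
    rw [hA m M hm hM, hu M hM x hx, Finset.sum_range_succ']
    simp [div_self hM.ne']
  have hfx : ∀ m : ℝ, 0 < m → ∀ x : Fin k → ℝ, x ≠ 0 → f m x = up 0 x + r m x := by
    intro m hm x hx
    rw [hexp m hm x hx]
    simp [hu0 m hm x hx]
  -- The zeroth coefficient must equal `f` also outside the domain `m > 0`, `x ≠ 0`.
  refine ⟨N₁ + N₂, by omega, fun j m x => if j = 0 then f m x else
    (if j < N₁ then c₁ j x else 0) + (if j < N₂ then c₂ j m x else 0), by simp, ?_⟩
  intro ρ hρ m hm x hx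
  have hρx : ρ • x ≠ 0 := smul_ne_zero hρ.ne' hx
  have hx₁ := h₁ ρ hρ x hx
  simp only [Nat.cast_zero, sub_zero] at hx₁
  rw [hfx _ (div_pos hm hρ) _ hρx, mul_add, hx₁, h₂ ρ hρ m hm x hx,
    ← sum_range_pad _ (fun j => c₁ j x) (Nat.le_add_right N₁ N₂),
    ← sum_range_pad _ (fun j => c₂ j m x) (Nat.le_add_left N₂ N₁), ← Finset.sum_add_distrib]
  refine Finset.sum_congr rfl fun j _ => ?_
  rw [← mul_add]
  congr 1
  rcases Nat.eq_zero_or_pos j with rfl | hj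
  · simp only [if_true]
    rw [if_pos (by omega), if_pos (by omega), hfx m hm x hx, hc₁, hc₂]
  · simp only [hj.ne', if_false]
end
end

section
/- Let l ∈ ℕ₀, D ∈ ℝ, M>0, P ∈ ℕ₀, and let u_0,…,u_P : ℝᵏ∖{0} → ℂ be m-independent functions, each of which scales almost homogeneously in x with degree D−l and some finite power. Then the family g^{(m)}(x) := m^l · Σ_{p=0}^{P} (log(m/M))^p u_p(x) is almost homogeneous with degree D and some finite power under the scaling (x,m) ↦ (ρx, m/ρ). -/
/-!
Fix `m > 0` and `x ≠ 0`. As a function of `t = log ρ`, the scaled family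
`ρ^D g^{(m/ρ)}(ρx)` is a polynomial: the factor `ρ^{-l}` from `(m/ρ)^l` lowers the degree `D` to
`D - l`, so each `u_p` contributes its own polynomial in `t`, while
`log (m/(ρM)) = log (m/M) - t`. The degree of this polynomial (`scalingPoly`) is bounded
independently of `m` and `x`, and the required families `c_j` are its coefficients. The constant
coefficient is `g` itself, as evaluation at `ρ = 1` shows.
-/

noncomputable section
open Filter Topology Finset

open Polynomial in
/-- The polynomial in `t = log ρ` describing the scaled family: here `a` stands for `m ^ l`, `b` for
`log (m / M)`, and `e p j` for the coefficient of `t ^ j` in the scaling of `u_p`, for `j < N p`. -/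
def scalingPoly (P : ℕ) (N : ℕ → ℕ) (a b : ℂ) (e : ℕ → ℕ → ℂ) : ℂ[X] :=
  C a * ∑ p ∈ Finset.range (P + 1), (C b - X) ^ p * ∑ j ∈ Finset.range (N p), C (e p j) * X ^ j

open Polynomial in
lemma natDegree_scalingPoly_lt (P : ℕ) (N : ℕ → ℕ) (a b : ℂ) (e : ℕ → ℕ → ℂ) :
    (scalingPoly P N a b e).natDegree < (∑ p ∈ Finset.range (P + 1), (p + N p)) + 1 := by
  refine Nat.lt_succ_of_le ((natDegree_C_mul_le _ _).trans ?_)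
  refine natDegree_sum_le_of_forall_le _ _ fun p hp => ?_
  refine le_trans ?_ (Finset.single_le_sum (f := fun p => p + N p) (fun _ _ => Nat.zero_le _) hp)
  refine natDegree_mul_le.trans (Nat.add_le_add ?_ ?_)
  · have h1 : (C b - X : ℂ[X]).natDegree ≤ 1 :=
      (natDegree_sub_le _ _).trans (by simp)
    simpa using natDegree_pow_le_of_le p h1
  · refine natDegree_sum_le_of_forall_le _ _ fun j hj => ?_
    exact (natDegree_C_mul_X_pow_le _ _).trans (Finset.mem_range.mp hj).le

lemma cpow_mul_div_pow (ρ m : ℝ) (hρ : 0 < ρ) (w : ℂ) (l : ℕ) :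
    cpow ρ w * ((m / ρ : ℝ) : ℂ) ^ l = (m : ℂ) ^ l * cpow ρ (w - l) := by
  have hρ' : (ρ : ℂ) ≠ 0 := by exact_mod_cast hρ.ne'
  have h : cpow ρ w = cpow ρ (w - l) * (ρ : ℂ) ^ l := by
    have h2 : (ρ : ℂ) ^ l = Complex.exp (l * (Real.log ρ : ℂ)) := by
      rw [Complex.exp_nat_mul, ← Complex.ofReal_exp, Real.exp_log hρ]
    rw [cpow, cpow, h2, ← Complex.exp_add]
    congr 1
    ring
  rw [h]
  rw [mul_assoc, ← mul_pow, Complex.ofReal_div, mul_div_cancel₀ _ hρ', mul_comm]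

/-- if each `u_p` (0 ≤ p ≤ P) is `m`-independent and scales almost
homogeneously in `x` with degree `D - l`, then
`g^{(m)}(x) := m^l · Σ_{p=0}^P (log (m/M))^p u_p(x)` is almost homogeneous with
degree `D` and some finite power under the scaling `(x,m) ↦ (ρx, m/ρ)`. -/
theorem almostHomogeneousXM_of_log_poly (k : ℕ) (l : ℕ) (D M : ℝ) (hM : 0 < M)
    (P : ℕ) (u : ℕ → (Fin k → ℝ) → ℂ)
    (hu : ∀ p : ℕ, p ≤ P → AlmostHomogeneous k ((D : ℂ) - (l : ℂ)) (u p)) :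
    AlmostHomogeneousXM k (D : ℂ)
      (fun (m : ℝ) (x : Fin k → ℝ) =>
        (m : ℂ) ^ l * ∑ p ∈ Finset.range (P + 1), (Real.log (m / M) : ℂ) ^ p * u p x) := by
  have hu' : ∀ p : ℕ, ∃ (N : ℕ) (e : ℕ → (Fin k → ℝ) → ℂ), p ≤ P →
      ∀ ρ : ℝ, 0 < ρ → ∀ x : Fin k → ℝ, x ≠ 0 →
        cpow ρ ((D : ℂ) - (l : ℂ)) * u p (ρ • x) =
          ∑ j ∈ Finset.range N, (Real.log ρ : ℂ) ^ j * e j x := by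
    intro p
    by_cases hp : p ≤ P
    · obtain ⟨N, -, e, -, h⟩ := hu p hp
      exact ⟨N, e, fun _ => h⟩
    · exact ⟨0, 0, fun h => absurd h hp⟩
  choose N e he using hu'
  set g : ℝ → (Fin k → ℝ) → ℂ := fun m x =>
    (m : ℂ) ^ l * ∑ p ∈ Finset.range (P + 1), (Real.log (m / M) : ℂ) ^ p * u p x with hg
  let q : ℝ → (Fin k → ℝ) → Polynomial ℂ := fun m x =>
    scalingPoly P N ((m : ℂ) ^ l) (Real.log (m / M) : ℂ) fun p j => e p j x
  have hq : ∀ ρ : ℝ, 0 < ρ → ∀ m : ℝ, 0 < m → ∀ x : Fin k → ℝ, x ≠ 0 →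
      cpow ρ D * g (m / ρ) (ρ • x) = (q m x).eval (Real.log ρ : ℂ) := by
    intro ρ hρ m hm x hx
    have hlog : Real.log (m / ρ / M) = Real.log (m / M) - Real.log ρ := by
      rw [div_right_comm, Real.log_div (by positivity) hρ.ne']
    simp only [hg, q, scalingPoly, Polynomial.eval_mul, Polynomial.eval_C,
      Polynomial.eval_finsetSum, Polynomial.eval_pow, Polynomial.eval_sub, Polynomial.eval_X]
    rw [← mul_assoc, cpow_mul_div_pow ρ m hρ, mul_assoc, Finset.mul_sum, hlog]
    congr 1
    refine Finset.sum_congr rfl fun p hp => ?_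
    rw [mul_left_comm, he p (Nat.lt_succ_iff.mp (Finset.mem_range.mp hp)) ρ hρ x hx]
    push_cast
    congr 1
    exact Finset.sum_congr rfl fun j _ => mul_comm _ _
  -- The equation `c 0 = g` is required for every `m` and `x`, also outside `m > 0`, `x ≠ 0` where
  -- the constant coefficient of `q m x` need not be `g m x`; hence the case distinction in `c`.
  refine ⟨(∑ p ∈ Finset.range (P + 1), (p + N p)) + 1, Nat.le_add_left _ _,
    fun j m x => if j = 0 then g m x else (q m x).coeff j, by simp, ?_⟩
  intro ρ hρ m hm x hx
  have h0 : (q m x).coeff 0 = g m x := by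
    have h1 := hq 1 one_pos m hm x hx
    simp only [cpow, Real.log_one, Complex.ofReal_zero, mul_zero, Complex.exp_zero, one_mul,
      div_one, one_smul] at h1
    rw [h1, Polynomial.coeff_zero_eq_eval_zero]
  rw [hq ρ hρ m hm x hx, Polynomial.eval_eq_sum_range' (natDegree_scalingPoly_lt ..)]
  refine Finset.sum_congr rfl fun j _ => ?_
  rw [mul_comm]
  congr 1
  change (q m x).coeff j = if j = 0 then g m x else (q m x).coeff j
  split_ifs with hj
  · rw [hj, h0]
  · rfl
end
end

section
/- Let the family f_1^{(m)} : ℝ^{k₁}∖{0} → ℂ fulfil the sm-expansion with degree D₁ and the family f_2^{(m)} : ℝ^{k₂}∖{0} → ℂ fulfil the sm-expansion with degree D₂ (both with the same mass scale M>0). Then the product family F^{(m)}(x,y) := f_1^{(m)}(x) · f_2^{(m)}(y), defined for x ∈ ℝ^{k₁}∖{0} and y ∈ ℝ^{k₂}∖{0}, fulfils the sm-expansion with degree D₁ + D₂ (with the definition of the sm-expansion applied on the domain (ℝ^{k₁}∖{0}) × (ℝ^{k₂}∖{0}), scaling both variables simultaneously: (x,y) ↦ (ρx, ρy)). -/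
/-!
At order `L`, the expansions of `f₁` and `f₂` are multiplied out and the terms sorted by their
total power of `m`. The terms `m ^ (a + b) u_a v_b` with `a + b = l ≤ L` form the new coefficient
of `m ^ l`; those with `a + b > L`, together with every product containing a remainder, form the
new remainder.

Each notion of almost homogeneity says that a rescaled function is a polynomial in `log ρ` with
degree bounded uniformly in the point (`LogPolyOn`, `logPolyOn_iff`), and such polynomials are
closed under sums and products, while the degrees add up under products. The coefficients of the
new expansion are polynomials in `log (m / M)` by the same token (`MassPoly.mul`). Since
`m ^ l u_l` is itself almost homogeneous under `(x, m) ↦ (ρ x, m / ρ)`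
(`MassPoly.almostHomogeneousXM`), so is the remainder. Finally, condition (E) is a vanishing order
as `m ↓ 0` (`VanishOrder`); orders add under products, `m ^ l u_l` has order `l`, and so each piece
of the new remainder has order at least `L + 1`.
-/

noncomputable section
open Filter Topology Finset

/-! Variants of the above notions on the product domain
`(ℝ^{k₁}∖{0}) × (ℝ^{k₂}∖{0})`, with both variables scaled simultaneously,
`(x,y) ↦ (ρx, ρy)`. -/

/-- `u` scales almost homogeneously in `(x,y)` with degree `w` and some finite power. -/
def AlmostHomogeneous2 (k₁ k₂ : ℕ) (w : ℂ)
    (u : (Fin k₁ → ℝ) → (Fin k₂ → ℝ) → ℂ) : Prop :=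
  ∃ N : ℕ, 1 ≤ N ∧ ∃ c : ℕ → (Fin k₁ → ℝ) → (Fin k₂ → ℝ) → ℂ, c 0 = u ∧
    ∀ ρ : ℝ, 0 < ρ → ∀ x : Fin k₁ → ℝ, x ≠ 0 → ∀ y : Fin k₂ → ℝ, y ≠ 0 →
      cpow ρ w * u (ρ • x) (ρ • y) = ∑ j ∈ Finset.range N, (Real.log ρ : ℂ) ^ j * c j x y

/-- A family `F^{(m)}` on the product domain is almost homogeneous with degree `D`
and some finite power under the scaling `(x,y,m) ↦ (ρx, ρy, m/ρ)`. -/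
def AlmostHomogeneousXM2 (k₁ k₂ : ℕ) (D : ℂ)
    (f : ℝ → (Fin k₁ → ℝ) → (Fin k₂ → ℝ) → ℂ) : Prop :=
  ∃ N : ℕ, 1 ≤ N ∧ ∃ c : ℕ → ℝ → (Fin k₁ → ℝ) → (Fin k₂ → ℝ) → ℂ, c 0 = f ∧
    ∀ ρ : ℝ, 0 < ρ → ∀ m : ℝ, 0 < m → ∀ x : Fin k₁ → ℝ, x ≠ 0 → ∀ y : Fin k₂ → ℝ, y ≠ 0 →
      cpow ρ D * f (m / ρ) (ρ • x) (ρ • y)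
        = ∑ j ∈ Finset.range N, (Real.log ρ : ℂ) ^ j * c j m x y

/-- Sm-expansion data on the product domain (expansion identity and (A)-(E)). -/
def SMData2 (k₁ k₂ : ℕ) (M D : ℝ) (f : ℝ → (Fin k₁ → ℝ) → (Fin k₂ → ℝ) → ℂ) (L : ℕ)
    (u : ℕ → ℝ → (Fin k₁ → ℝ) → (Fin k₂ → ℝ) → ℂ)
    (r : ℝ → (Fin k₁ → ℝ) → (Fin k₂ → ℝ) → ℂ) : Prop :=
  (∀ m : ℝ, 0 < m → ∀ x : Fin k₁ → ℝ, x ≠ 0 → ∀ y : Fin k₂ → ℝ, y ≠ 0 →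
      f m x y = ∑ l ∈ Finset.range (L + 1), (m : ℂ) ^ l * u l m x y + r m x y) ∧
  (∀ m m' : ℝ, 0 < m → 0 < m' → u 0 m = u 0 m') ∧
  (∀ l : ℕ, l ≤ L → ∃ P : ℕ, ∃ up : ℕ → (Fin k₁ → ℝ) → (Fin k₂ → ℝ) → ℂ,
      (∀ p : ℕ, p ≤ P → AlmostHomogeneous2 k₁ k₂ ((D : ℂ) - (l : ℂ)) (up p)) ∧
      (∀ m : ℝ, 0 < m → ∀ x : Fin k₁ → ℝ, x ≠ 0 → ∀ y : Fin k₂ → ℝ, y ≠ 0 →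
        u l m x y = ∑ p ∈ Finset.range (P + 1), (Real.log (m / M) : ℂ) ^ p * up p x y)) ∧
  AlmostHomogeneousXM2 k₁ k₂ (D : ℂ) r ∧
  (∀ x : Fin k₁ → ℝ, x ≠ 0 → ∀ y : Fin k₂ → ℝ, y ≠ 0 →
      ContDiffOn ℝ (⊤ : ℕ∞) (fun m : ℝ => r m x y) (Set.Ioi (0 : ℝ)) ∧
      ∀ ε : ℝ, 0 < ε →
        Filter.Tendsto (fun m : ℝ => (((m / M) ^ (-(L + 1 : ℝ) + ε) : ℝ) : ℂ) * r m x y)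
          (nhdsWithin 0 (Set.Ioi (0 : ℝ))) (nhds 0))

/-- `F` fulfils the sm-expansion with degree `D` on the product domain. -/
def SMExpansion2 (k₁ k₂ : ℕ) (M D : ℝ)
    (f : ℝ → (Fin k₁ → ℝ) → (Fin k₂ → ℝ) → ℂ) : Prop :=
  ∀ L : ℕ, ∃ u r, SMData2 k₁ k₂ M D f L u r

/-! ### Functions polynomial in `log ρ` -/

/-- `G x ρ` is, for every `x` satisfying `S`, a polynomial in `log ρ` (`ρ > 0`), with degrees
bounded uniformly in `x`. Outside `S` the polynomial `P x` is irrelevant. -/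
def LogPolyOn {X : Type*} (S : X → Prop) (G : X → ℝ → ℂ) : Prop :=
  ∃ N : ℕ, ∃ P : X → Polynomial ℂ, (∀ x, (P x).natDegree ≤ N) ∧
    ∀ x, S x → ∀ ρ : ℝ, 0 < ρ → G x ρ = (P x).eval (Real.log ρ : ℂ)

/-- The requirement `c 0 = F` is harmless when `F = G · 1`: it is forced on `S` by `ρ = 1`, and
outside `S` the coefficient `c 0` may be chosen freely. -/
lemma logPolyOn_iff {X : Type*} {S : X → Prop} {G : X → ℝ → ℂ} {F : X → ℂ}
    (hF : ∀ x, G x 1 = F x) :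
    LogPolyOn S G ↔ ∃ N : ℕ, 1 ≤ N ∧ ∃ c : ℕ → X → ℂ, c 0 = F ∧
      ∀ x, S x → ∀ ρ : ℝ, 0 < ρ →
        G x ρ = ∑ j ∈ Finset.range N, (Real.log ρ : ℂ) ^ j * c j x := by
  constructor
  · rintro ⟨N, P, hN, hP⟩
    refine ⟨N + 1, by omega, fun j x => if j = 0 then F x else (P x).coeff j, by simp, ?_⟩
    intro x hx ρ hρ
    rw [hP x hx ρ hρ, Polynomial.eval_eq_sum_range' (Nat.lt_succ_of_le (hN x))]
    refine Finset.sum_congr rfl fun j _ => ?_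
    rw [mul_comm]
    dsimp only
    split_ifs with hj
    · have h1 := hP x hx 1 one_pos
      rw [hF] at h1
      simp only [Real.log_one, Complex.ofReal_zero] at h1
      rw [h1, hj, Polynomial.coeff_zero_eq_eval_zero]
    · rfl
  · rintro ⟨N, -, c, -, hc⟩
    refine ⟨N, fun x => ∑ j ∈ Finset.range N, Polynomial.monomial j (c j x), fun x => ?_, ?_⟩
    · refine Polynomial.natDegree_sum_le_of_forall_le _ _ fun j hj => ?_
      exact (Polynomial.natDegree_monomial_le _).trans (Finset.mem_range.1 hj).le
    · intro x hx ρ hρ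
      rw [hc x hx ρ hρ, Polynomial.eval_finsetSum]
      exact Finset.sum_congr rfl fun j _ => by rw [Polynomial.eval_monomial, mul_comm]

lemma LogPolyOn.congr {X : Type*} {S : X → Prop} {G H : X → ℝ → ℂ} (hG : LogPolyOn S G)
    (h : ∀ x, S x → ∀ ρ : ℝ, 0 < ρ → H x ρ = G x ρ) : LogPolyOn S H := by
  obtain ⟨N, P, hN, hP⟩ := hG
  exact ⟨N, P, hN, fun x hx ρ hρ => (h x hx ρ hρ).trans (hP x hx ρ hρ)⟩

lemma LogPolyOn.comp {X Y : Type*} {S : X → Prop} {T : Y → Prop} {G : X → ℝ → ℂ}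
    (hG : LogPolyOn S G) (φ : Y → X) (hφ : ∀ y, T y → S (φ y)) :
    LogPolyOn T (fun y => G (φ y)) := by
  obtain ⟨N, P, hN, hP⟩ := hG
  exact ⟨N, fun y => P (φ y), fun y => hN _, fun y hy => hP _ (hφ y hy)⟩

lemma LogPolyOn.const {X : Type*} (S : X → Prop) (a : X → ℂ) :
    LogPolyOn S (fun x _ => a x) :=
  ⟨0, fun x => Polynomial.C (a x), by simp, by simp⟩

lemma LogPolyOn.log {X : Type*} (S : X → Prop) :
    LogPolyOn S (fun _ ρ => (Real.log ρ : ℂ)) :=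
  ⟨1, fun _ => Polynomial.X, by simp, by simp⟩

lemma LogPolyOn.add {X : Type*} {S : X → Prop} {G H : X → ℝ → ℂ} (hG : LogPolyOn S G)
    (hH : LogPolyOn S H) : LogPolyOn S (fun x ρ => G x ρ + H x ρ) := by
  obtain ⟨N, P, hN, hP⟩ := hG
  obtain ⟨N', Q, hN', hQ⟩ := hH
  refine ⟨max N N', fun x => P x + Q x, fun x => ?_, fun x hx ρ hρ => ?_⟩
  · exact (Polynomial.natDegree_add_le _ _).trans (max_le_max (hN x) (hN' x))
  · simp only [Polynomial.eval_add, hP x hx ρ hρ, hQ x hx ρ hρ]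

lemma LogPolyOn.mul {X : Type*} {S : X → Prop} {G H : X → ℝ → ℂ} (hG : LogPolyOn S G)
    (hH : LogPolyOn S H) : LogPolyOn S (fun x ρ => G x ρ * H x ρ) := by
  obtain ⟨N, P, hN, hP⟩ := hG
  obtain ⟨N', Q, hN', hQ⟩ := hH
  refine ⟨N + N', fun x => P x * Q x, fun x => ?_, fun x hx ρ hρ => ?_⟩
  · exact Polynomial.natDegree_mul_le.trans (add_le_add (hN x) (hN' x))
  · simp only [Polynomial.eval_mul, hP x hx ρ hρ, hQ x hx ρ hρ]

lemma LogPolyOn.sum {X ι : Type*} {S : X → Prop} (s : Finset ι) {G : ι → X → ℝ → ℂ}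
    (hG : ∀ i ∈ s, LogPolyOn S (G i)) : LogPolyOn S (fun x ρ => ∑ i ∈ s, G i x ρ) := by
  classical
  induction s using Finset.induction_on with
  | empty => simpa using LogPolyOn.const S (fun _ => 0)
  | insert i s hi ih =>
    simp only [Finset.sum_insert hi]
    exact (hG i (by simp)).add (ih fun j hj => hG j (by simp [hj]))

lemma LogPolyOn.pow {X : Type*} {S : X → Prop} {G : X → ℝ → ℂ} (hG : LogPolyOn S G) (n : ℕ) :
    LogPolyOn S (fun x ρ => G x ρ ^ n) := by
  induction n with
  | zero => simpa using LogPolyOn.const S (fun _ => 1)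
  | succ n ih => simpa only [pow_succ] using ih.mul hG

/-! ### Almost homogeneity -/

lemma cpow_one_left (w : ℂ) : cpow 1 w = 1 := by simp [cpow]

lemma cpow_add (ρ : ℝ) (w z : ℂ) : cpow ρ (w + z) = cpow ρ w * cpow ρ z := by
  simp [cpow, add_mul, Complex.exp_add]

lemma cpow_natCast {ρ : ℝ} (hρ : 0 < ρ) (n : ℕ) : cpow ρ (n : ℂ) = (ρ : ℂ) ^ n := by
  rw [cpow, Complex.exp_nat_mul, ← Complex.ofReal_exp, Real.exp_log hρ]

lemma almostHomogeneous_iff {k : ℕ} {w : ℂ} {u : (Fin k → ℝ) → ℂ} :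
    AlmostHomogeneous k w u ↔
      LogPolyOn (fun x : Fin k → ℝ => x ≠ 0) (fun x ρ => cpow ρ w * u (ρ • x)) := by
  rw [logPolyOn_iff (F := u) (by simp [cpow_one_left])]
  constructor
  · rintro ⟨N, hN, c, hc, h⟩
    exact ⟨N, hN, c, hc, fun x hx ρ hρ => h ρ hρ x hx⟩
  · rintro ⟨N, hN, c, hc, h⟩
    exact ⟨N, hN, c, hc, fun ρ hρ x hx => h x hx ρ hρ⟩

lemma almostHomogeneousXM_iff {k : ℕ} {w : ℂ} {f : ℝ → (Fin k → ℝ) → ℂ} :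
    AlmostHomogeneousXM k w f ↔
      LogPolyOn (fun z : ℝ × (Fin k → ℝ) => 0 < z.1 ∧ z.2 ≠ 0)
        (fun z ρ => cpow ρ w * f (z.1 / ρ) (ρ • z.2)) := by
  rw [logPolyOn_iff (F := fun z => f z.1 z.2) (by simp [cpow_one_left])]
  constructor
  · rintro ⟨N, hN, c, hc, h⟩
    exact ⟨N, hN, fun j z => c j z.1 z.2, by simp [hc],
      fun z hz ρ hρ => h ρ hρ z.1 hz.1 z.2 hz.2⟩
  · rintro ⟨N, hN, c, hc, h⟩
    exact ⟨N, hN, fun j m x => c j (m, x), by simp [hc],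
      fun ρ hρ m hm x hx => h (m, x) ⟨hm, hx⟩ ρ hρ⟩

lemma almostHomogeneous2_iff {k₁ k₂ : ℕ} {w : ℂ} {u : (Fin k₁ → ℝ) → (Fin k₂ → ℝ) → ℂ} :
    AlmostHomogeneous2 k₁ k₂ w u ↔
      LogPolyOn (fun z : (Fin k₁ → ℝ) × (Fin k₂ → ℝ) => z.1 ≠ 0 ∧ z.2 ≠ 0)
        (fun z ρ => cpow ρ w * u (ρ • z.1) (ρ • z.2)) := by
  rw [logPolyOn_iff (F := fun z => u z.1 z.2) (by simp [cpow_one_left])]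
  constructor
  · rintro ⟨N, hN, c, hc, h⟩
    exact ⟨N, hN, fun j z => c j z.1 z.2, by simp [hc],
      fun z hz ρ hρ => h ρ hρ z.1 hz.1 z.2 hz.2⟩
  · rintro ⟨N, hN, c, hc, h⟩
    exact ⟨N, hN, fun j x y => c j (x, y), by simp [hc],
      fun ρ hρ x hx y hy => h (x, y) ⟨hx, hy⟩ ρ hρ⟩

lemma almostHomogeneousXM2_iff {k₁ k₂ : ℕ} {w : ℂ}
    {f : ℝ → (Fin k₁ → ℝ) → (Fin k₂ → ℝ) → ℂ} :
    AlmostHomogeneousXM2 k₁ k₂ w f ↔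
      LogPolyOn (fun z : ℝ × (Fin k₁ → ℝ) × (Fin k₂ → ℝ) => 0 < z.1 ∧ z.2.1 ≠ 0 ∧ z.2.2 ≠ 0)
        (fun z ρ => cpow ρ w * f (z.1 / ρ) (ρ • z.2.1) (ρ • z.2.2)) := by
  rw [logPolyOn_iff (F := fun z => f z.1 z.2.1 z.2.2) (by simp [cpow_one_left])]
  constructor
  · rintro ⟨N, hN, c, hc, h⟩
    exact ⟨N, hN, fun j z => c j z.1 z.2.1 z.2.2, by simp [hc],
      fun z hz ρ hρ => h ρ hρ z.1 hz.1 z.2.1 hz.2.1 z.2.2 hz.2.2⟩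
  · rintro ⟨N, hN, c, hc, h⟩
    exact ⟨N, hN, fun j m x y => c j (m, x, y), by simp [hc],
      fun ρ hρ m hm x hx y hy => h (m, x, y) ⟨hm, hx, hy⟩ ρ hρ⟩

lemma AlmostHomogeneous2.zero {k₁ k₂ : ℕ} {w : ℂ} :
    AlmostHomogeneous2 k₁ k₂ w (fun _ _ => 0) :=
  almostHomogeneous2_iff.2 (by simpa using LogPolyOn.const _ (fun _ => 0))

lemma AlmostHomogeneous2.add {k₁ k₂ : ℕ} {w : ℂ} {u v : (Fin k₁ → ℝ) → (Fin k₂ → ℝ) → ℂ}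
    (hu : AlmostHomogeneous2 k₁ k₂ w u) (hv : AlmostHomogeneous2 k₁ k₂ w v) :
    AlmostHomogeneous2 k₁ k₂ w (fun x y => u x y + v x y) :=
  almostHomogeneous2_iff.2 <|
    ((almostHomogeneous2_iff.1 hu).add (almostHomogeneous2_iff.1 hv)).congr
      fun _ _ _ _ => by ring

lemma AlmostHomogeneous.mul {k₁ k₂ : ℕ} {w₁ w₂ : ℂ} {u : (Fin k₁ → ℝ) → ℂ}
    {v : (Fin k₂ → ℝ) → ℂ} (hu : AlmostHomogeneous k₁ w₁ u) (hv : AlmostHomogeneous k₂ w₂ v) :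
    AlmostHomogeneous2 k₁ k₂ (w₁ + w₂) (fun x y => u x * v y) :=
  almostHomogeneous2_iff.2 <|
    (((almostHomogeneous_iff.1 hu).comp Prod.fst fun _ h => h.1).mul
      ((almostHomogeneous_iff.1 hv).comp Prod.snd fun _ h => h.2)).congr
      fun _ _ _ _ => by rw [cpow_add]; ring

lemma AlmostHomogeneousXM2.add {k₁ k₂ : ℕ} {w : ℂ}
    {f g : ℝ → (Fin k₁ → ℝ) → (Fin k₂ → ℝ) → ℂ}
    (hf : AlmostHomogeneousXM2 k₁ k₂ w f) (hg : AlmostHomogeneousXM2 k₁ k₂ w g) :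
    AlmostHomogeneousXM2 k₁ k₂ w (fun m x y => f m x y + g m x y) :=
  almostHomogeneousXM2_iff.2 <|
    ((almostHomogeneousXM2_iff.1 hf).add (almostHomogeneousXM2_iff.1 hg)).congr
      fun _ _ _ _ => by ring

lemma AlmostHomogeneousXM2.sum {k₁ k₂ : ℕ} {w : ℂ} {ι : Type*} (s : Finset ι)
    {f : ι → ℝ → (Fin k₁ → ℝ) → (Fin k₂ → ℝ) → ℂ}
    (hf : ∀ i ∈ s, AlmostHomogeneousXM2 k₁ k₂ w (f i)) :
    AlmostHomogeneousXM2 k₁ k₂ w (fun m x y => ∑ i ∈ s, f i m x y) :=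
  almostHomogeneousXM2_iff.2 <|
    (LogPolyOn.sum s fun i hi => almostHomogeneousXM2_iff.1 (hf i hi)).congr
      fun _ _ _ _ => by rw [Finset.mul_sum]

lemma AlmostHomogeneousXM.sum {k : ℕ} {w : ℂ} {ι : Type*} (s : Finset ι)
    {f : ι → ℝ → (Fin k → ℝ) → ℂ}
    (hf : ∀ i ∈ s, AlmostHomogeneousXM k w (f i)) :
    AlmostHomogeneousXM k w (fun m x => ∑ i ∈ s, f i m x) :=
  almostHomogeneousXM_iff.2 <|
    (LogPolyOn.sum s fun i hi => almostHomogeneousXM_iff.1 (hf i hi)).congr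
      fun _ _ _ _ => by rw [Finset.mul_sum]

lemma AlmostHomogeneousXM.mul {k₁ k₂ : ℕ} {w₁ w₂ : ℂ} {f : ℝ → (Fin k₁ → ℝ) → ℂ}
    {g : ℝ → (Fin k₂ → ℝ) → ℂ} (hf : AlmostHomogeneousXM k₁ w₁ f)
    (hg : AlmostHomogeneousXM k₂ w₂ g) :
    AlmostHomogeneousXM2 k₁ k₂ (w₁ + w₂) (fun m x y => f m x * g m y) :=
  almostHomogeneousXM2_iff.2 <|
    (((almostHomogeneousXM_iff.1 hf).comp (fun z => (z.1, z.2.1)) fun _ h => ⟨h.1, h.2.1⟩).mul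
      ((almostHomogeneousXM_iff.1 hg).comp (fun z => (z.1, z.2.2)) fun _ h => ⟨h.1, h.2.2⟩)).congr
      fun _ _ _ _ => by rw [cpow_add]; ring

/-! ### The order of vanishing as `m ↓ 0` -/

/-- `g` is smooth on `(0, ∞)` and `o(m^(s - ε))` as `m ↓ 0` for every `ε > 0`: condition (E) with
a real exponent `s` in place of `L + 1`. -/
def VanishOrder (M s : ℝ) (g : ℝ → ℂ) : Prop :=
  ContDiffOn ℝ (⊤ : ℕ∞) g (Set.Ioi (0 : ℝ)) ∧
    ∀ ε : ℝ, 0 < ε →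
      Filter.Tendsto (fun m : ℝ => (((m / M) ^ (-s + ε) : ℝ) : ℂ) * g m)
        (nhdsWithin 0 (Set.Ioi (0 : ℝ))) (nhds 0)

lemma VanishOrder.mono {M s t : ℝ} {g : ℝ → ℂ} (hg : VanishOrder M s g) (h : t ≤ s) :
    VanishOrder M t g := by
  refine ⟨hg.1, fun ε hε => ?_⟩
  have := hg.2 (ε + (s - t)) (by linarith)
  rwa [show -s + (ε + (s - t)) = -t + ε by ring] at this

lemma VanishOrder.congr {M s : ℝ} {g h : ℝ → ℂ} (hg : VanishOrder M s g)
    (hgh : ∀ m : ℝ, 0 < m → h m = g m) : VanishOrder M s h := by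
  refine ⟨hg.1.congr fun m hm => hgh m hm, fun ε hε => (hg.2 ε hε).congr' ?_⟩
  filter_upwards [self_mem_nhdsWithin] with m hm
  rw [hgh m hm]

lemma VanishOrder.add {M s : ℝ} {g h : ℝ → ℂ} (hg : VanishOrder M s g)
    (hh : VanishOrder M s h) : VanishOrder M s (fun m => g m + h m) := by
  refine ⟨hg.1.add hh.1, fun ε hε => ?_⟩
  simpa [mul_add] using (hg.2 ε hε).add (hh.2 ε hε)

lemma VanishOrder.zero {M s : ℝ} : VanishOrder M s (fun _ => 0) :=
  ⟨contDiffOn_const, fun ε _ => by simp⟩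

lemma VanishOrder.sum {M s : ℝ} {ι : Type*} (t : Finset ι) {g : ι → ℝ → ℂ}
    (hg : ∀ i ∈ t, VanishOrder M s (g i)) : VanishOrder M s (fun m => ∑ i ∈ t, g i m) := by
  classical
  induction t using Finset.induction_on with
  | empty => simpa using VanishOrder.zero
  | insert i t hi ih =>
    simp only [Finset.sum_insert hi]
    exact (hg i (by simp)).add (ih fun j hj => hg j (by simp [hj]))

lemma VanishOrder.mul {M s t : ℝ} (hM : 0 < M) {g h : ℝ → ℂ} (hg : VanishOrder M s g)
    (hh : VanishOrder M t h) : VanishOrder M (s + t) (fun m => g m * h m) := by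
  refine ⟨hg.1.mul hh.1, fun ε hε => ?_⟩
  have := (hg.2 (ε / 2) (by linarith)).mul (hh.2 (ε / 2) (by linarith))
  rw [mul_zero] at this
  refine this.congr' ?_
  filter_upwards [self_mem_nhdsWithin] with m hm
  rw [show -(s + t) + ε = (-s + ε / 2) + (-t + ε / 2) by ring,
    Real.rpow_add (div_pos hm hM) (-s + ε / 2) (-t + ε / 2)]
  push_cast
  ring

lemma tendsto_div_nhdsGT_zero {M : ℝ} (hM : 0 < M) :
    Tendsto (fun m : ℝ => m / M) (𝓝[>] 0) (𝓝[>] 0) := by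
  refine tendsto_nhdsWithin_iff.2 ⟨?_, ?_⟩
  · have : Tendsto (fun m : ℝ => m / M) (𝓝 0) (𝓝 (0 / M)) := tendsto_id.div_const M
    rw [zero_div] at this
    exact this.mono_left nhdsWithin_le_nhds
  · filter_upwards [self_mem_nhdsWithin] with m hm
    exact div_pos hm hM

lemma tendsto_div_rpow_nhdsGT_zero {M ε : ℝ} (hM : 0 < M) (hε : 0 < ε) :
    Tendsto (fun m : ℝ => (m / M) ^ ε) (𝓝[>] 0) (𝓝 0) := by
  have h : Tendsto (fun t : ℝ => t ^ ε) (𝓝[>] 0) (𝓝 0) := by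
    have := (Real.continuous_rpow_const hε.le).tendsto 0
    rw [Real.zero_rpow hε.ne'] at this
    exact this.mono_left nhdsWithin_le_nhds
  exact h.comp (tendsto_div_nhdsGT_zero hM)

lemma VanishOrder.const {M : ℝ} (hM : 0 < M) (a : ℂ) : VanishOrder M 0 (fun _ => a) := by
  refine ⟨contDiffOn_const, fun ε hε => ?_⟩
  have := (Complex.continuous_ofReal.tendsto 0).comp (tendsto_div_rpow_nhdsGT_zero hM hε)
  simpa using this.mul_const a

lemma VanishOrder.log {M : ℝ} (hM : 0 < M) :
    VanishOrder M 0 (fun m => (Real.log (m / M) : ℂ)) := by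
  constructor
  · refine Complex.ofRealCLM.contDiff.comp_contDiffOn (ContDiffOn.log ?_ ?_)
    · exact contDiffOn_id.div_const M
    · intro m hm
      exact (div_pos hm hM).ne'
  · intro ε hε
    have := (tendsto_log_mul_rpow_nhdsGT_zero hε).comp (tendsto_div_nhdsGT_zero hM)
    have := (Complex.continuous_ofReal.tendsto 0).comp this
    simpa [Function.comp_def, mul_comm] using this

lemma VanishOrder.id {M : ℝ} (hM : 0 < M) : VanishOrder M 1 (fun m => (m : ℂ)) := by
  refine ⟨Complex.ofRealCLM.contDiff.contDiffOn, fun ε hε => ?_⟩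
  have := (Complex.continuous_ofReal.tendsto 0).comp (tendsto_div_rpow_nhdsGT_zero hM hε)
  have := this.mul_const (M : ℂ)
  rw [Complex.ofReal_zero, zero_mul] at this
  refine this.congr' ?_
  filter_upwards [self_mem_nhdsWithin] with m hm
  have hm' : 0 < m / M := div_pos hm hM
  simp only [Function.comp_apply]
  rw [← Complex.ofReal_mul, ← Complex.ofReal_mul]
  congr 1
  rw [show ε = (-1 + ε) + 1 by ring, Real.rpow_add hm', Real.rpow_one]
  rw [show -1 + (-1 + ε + 1) = -1 + ε by ring]
  field_simp

lemma VanishOrder.pow {M s : ℝ} (hM : 0 < M) {g : ℝ → ℂ} (hg : VanishOrder M s g) (n : ℕ) :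
    VanishOrder M (n * s) (fun m => g m ^ n) := by
  induction n with
  | zero => simpa using VanishOrder.const hM 1
  | succ n ih =>
    have := ih.mul hM hg
    simp only [pow_succ]
    rwa [show ((n + 1 : ℕ) : ℝ) * s = n * s + s by push_cast; ring]

/-! ### Polynomials in `log (m / M)` with almost homogeneous coefficients -/

/-- Conditions (B) and (C) for one coefficient: `U m x` is a polynomial in `log (m / M)` whose
coefficients are almost homogeneous of degree `w`. -/
def MassPoly (k : ℕ) (M : ℝ) (w : ℂ) (U : ℝ → (Fin k → ℝ) → ℂ) : Prop :=
  ∃ P : ℕ, ∃ up : ℕ → (Fin k → ℝ) → ℂ,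
    (∀ p : ℕ, p ≤ P → AlmostHomogeneous k w (up p)) ∧
    (∀ m : ℝ, 0 < m → ∀ x : Fin k → ℝ, x ≠ 0 →
      U m x = ∑ p ∈ Finset.range (P + 1), (Real.log (m / M) : ℂ) ^ p * up p x)

/-- The analogue of `MassPoly` on the product domain. -/
def MassPoly2 (k₁ k₂ : ℕ) (M : ℝ) (w : ℂ)
    (U : ℝ → (Fin k₁ → ℝ) → (Fin k₂ → ℝ) → ℂ) : Prop :=
  ∃ P : ℕ, ∃ up : ℕ → (Fin k₁ → ℝ) → (Fin k₂ → ℝ) → ℂ,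
    (∀ p : ℕ, p ≤ P → AlmostHomogeneous2 k₁ k₂ w (up p)) ∧
    (∀ m : ℝ, 0 < m → ∀ x : Fin k₁ → ℝ, x ≠ 0 → ∀ y : Fin k₂ → ℝ, y ≠ 0 →
      U m x y = ∑ p ∈ Finset.range (P + 1), (Real.log (m / M) : ℂ) ^ p * up p x y)

/-- The factor `m ^ l` raises the degree by `l`, because `m` has weight `-1`; and
`log (m / (ρ M)) = log (m / M) - log ρ` keeps everything polynomial in `log ρ`. -/
lemma MassPoly.almostHomogeneousXM {k : ℕ} {M : ℝ} (hM : 0 < M) {D : ℂ} {l : ℕ}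
    {U : ℝ → (Fin k → ℝ) → ℂ} (hU : MassPoly k M (D - l) U) :
    AlmostHomogeneousXM k D (fun m x => (m : ℂ) ^ l * U m x) := by
  obtain ⟨P, up, hup, hU⟩ := hU
  rw [almostHomogeneousXM_iff]
  have key : LogPolyOn (fun z : ℝ × (Fin k → ℝ) => 0 < z.1 ∧ z.2 ≠ 0)
      (fun z ρ => (z.1 : ℂ) ^ l * ∑ p ∈ Finset.range (P + 1),
        ((Real.log (z.1 / M) : ℂ) + (-1) * (Real.log ρ : ℂ)) ^ p *
          (cpow ρ (D - l) * up p (ρ • z.2))) := by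
    refine (LogPolyOn.const _ fun z : ℝ × (Fin k → ℝ) => (z.1 : ℂ) ^ l).mul
      (LogPolyOn.sum _ fun p hp => ?_)
    refine (LogPolyOn.pow ?_ p).mul ?_
    · exact (LogPolyOn.const _ fun z : ℝ × (Fin k → ℝ) => (Real.log (z.1 / M) : ℂ)).add
        ((LogPolyOn.const _ fun _ => -1).mul (LogPolyOn.log _))
    · exact (almostHomogeneous_iff.1 (hup p (Nat.lt_succ_iff.1 (Finset.mem_range.1 hp)))).comp
        Prod.snd fun _ h => h.2
  refine key.congr ?_
  rintro ⟨m, x⟩ ⟨hm, hx⟩ ρ hρ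
  dsimp only at hm hx ⊢
  rw [hU _ (div_pos hm hρ) _ (smul_ne_zero hρ.ne' hx)]
  have hlog : Real.log (m / ρ / M) = Real.log (m / M) + (-1) * Real.log ρ := by
    rw [show m / ρ / M = m / M / ρ by field_simp, Real.log_div (div_pos hm hM).ne' hρ.ne']
    ring
  have hD : cpow ρ D = cpow ρ (D - l) * (ρ : ℂ) ^ l := by
    rw [← cpow_natCast hρ, ← cpow_add, sub_add_cancel]
  have hρ' : (ρ : ℂ) ≠ 0 := by exact_mod_cast hρ.ne'
  have hml : cpow ρ D * ((m / ρ : ℝ) : ℂ) ^ l = (m : ℂ) ^ l * cpow ρ (D - l) := by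
    rw [hD, Complex.ofReal_div, div_pow]
    field_simp
  rw [← mul_assoc, hml, mul_assoc, Finset.mul_sum]
  congr 1
  refine Finset.sum_congr rfl fun p _ => ?_
  rw [hlog]
  push_cast
  ring

lemma MassPoly.vanishOrder {k : ℕ} {M : ℝ} (hM : 0 < M) {w : ℂ}
    {U : ℝ → (Fin k → ℝ) → ℂ} (hU : MassPoly k M w U) (l : ℕ) {x : Fin k → ℝ} (hx : x ≠ 0) :
    VanishOrder M l (fun m => (m : ℂ) ^ l * U m x) := by
  obtain ⟨P, up, -, hU⟩ := hU
  have h1 := (VanishOrder.id hM).pow hM l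
  have h2 : VanishOrder M 0 (fun m => ∑ p ∈ Finset.range (P + 1),
      (Real.log (m / M) : ℂ) ^ p * up p x) := by
    refine VanishOrder.sum _ fun p _ => ?_
    simpa using ((VanishOrder.log hM).pow hM p).mul hM (VanishOrder.const hM (up p x))
  have h3 := h1.mul hM h2
  rw [mul_one, add_zero] at h3
  exact h3.congr fun m hm => by rw [hU m hm x hx]

lemma MassPoly2.zero {k₁ k₂ : ℕ} {M : ℝ} {w : ℂ} :
    MassPoly2 k₁ k₂ M w (fun _ _ _ => 0) :=
  ⟨0, fun _ _ _ => 0, fun _ _ => AlmostHomogeneous2.zero, by simp⟩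

lemma sum_range_extend_zero {P Q : ℕ} (h : P ≤ Q) (t : ℂ) (a : ℕ → ℂ) :
    ∑ p ∈ Finset.range (Q + 1), t ^ p * (if p ≤ P then a p else 0) =
      ∑ p ∈ Finset.range (P + 1), t ^ p * a p := by
  symm
  rw [← Finset.sum_subset (Finset.range_mono (Nat.succ_le_succ h))]
  · refine Finset.sum_congr rfl fun p hp => ?_
    rw [if_pos (Nat.lt_succ_iff.1 (Finset.mem_range.1 hp))]
  · intro p _ hp
    rw [if_neg (fun h' => hp (Finset.mem_range.2 (Nat.lt_succ_of_le h'))), mul_zero]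

lemma MassPoly2.add {k₁ k₂ : ℕ} {M : ℝ} {w : ℂ} {U V : ℝ → (Fin k₁ → ℝ) → (Fin k₂ → ℝ) → ℂ}
    (hU : MassPoly2 k₁ k₂ M w U) (hV : MassPoly2 k₁ k₂ M w V) :
    MassPoly2 k₁ k₂ M w (fun m x y => U m x y + V m x y) := by
  obtain ⟨P, a, ha, hU⟩ := hU
  obtain ⟨Q, b, hb, hV⟩ := hV
  refine ⟨P + Q, fun p x y => (if p ≤ P then a p x y else 0) + (if p ≤ Q then b p x y else 0),
    fun p _ => AlmostHomogeneous2.add ?_ ?_, fun m hm x hx y hy => ?_⟩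
  · by_cases h : p ≤ P
    · simpa [h] using ha p h
    · simpa [h] using AlmostHomogeneous2.zero
  · by_cases h : p ≤ Q
    · simpa [h] using hb p h
    · simpa [h] using AlmostHomogeneous2.zero
  · simp only [mul_add, Finset.sum_add_distrib]
    rw [sum_range_extend_zero (Nat.le_add_right P Q) _ (fun p => a p x y),
      sum_range_extend_zero (Nat.le_add_left Q P) _ (fun p => b p x y),
      hU m hm x hx y hy, hV m hm x hx y hy]

lemma MassPoly2.sum {k₁ k₂ : ℕ} {M : ℝ} {w : ℂ} {ι : Type*} (s : Finset ι)
    {U : ι → ℝ → (Fin k₁ → ℝ) → (Fin k₂ → ℝ) → ℂ}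
    (hU : ∀ i ∈ s, MassPoly2 k₁ k₂ M w (U i)) :
    MassPoly2 k₁ k₂ M w (fun m x y => ∑ i ∈ s, U i m x y) := by
  classical
  induction s using Finset.induction_on with
  | empty => simpa using MassPoly2.zero
  | insert i s hi ih =>
    simp only [Finset.sum_insert hi]
    exact (hU i (by simp)).add (ih fun j hj => hU j (by simp [hj]))

lemma MassPoly2.monomial {k₁ k₂ : ℕ} {M : ℝ} {w : ℂ} {a : (Fin k₁ → ℝ) → (Fin k₂ → ℝ) → ℂ}
    (ha : AlmostHomogeneous2 k₁ k₂ w a) (n : ℕ) :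
    MassPoly2 k₁ k₂ M w (fun m x y => (Real.log (m / M) : ℂ) ^ n * a x y) := by
  refine ⟨n, fun p x y => if p = n then a x y else 0, fun p _ => ?_, fun m _ x _ y _ => ?_⟩
  · by_cases h : p = n
    · simpa [h] using ha
    · simpa [h] using AlmostHomogeneous2.zero
  · simp

lemma MassPoly.mul {k₁ k₂ : ℕ} {M : ℝ} {w₁ w₂ : ℂ} {U : ℝ → (Fin k₁ → ℝ) → ℂ}
    {V : ℝ → (Fin k₂ → ℝ) → ℂ} (hU : MassPoly k₁ M w₁ U) (hV : MassPoly k₂ M w₂ V) :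
    MassPoly2 k₁ k₂ M (w₁ + w₂) (fun m x y => U m x * V m y) := by
  obtain ⟨P, a, ha, hU⟩ := hU
  obtain ⟨Q, b, hb, hV⟩ := hV
  have key : MassPoly2 k₁ k₂ M (w₁ + w₂) (fun m x y =>
      ∑ i ∈ Finset.range (P + 1), ∑ j ∈ Finset.range (Q + 1),
        (Real.log (m / M) : ℂ) ^ (i + j) * (a i x * b j y)) :=
    MassPoly2.sum _ fun i hi => MassPoly2.sum _ fun j hj => MassPoly2.monomial
      ((ha i (Nat.lt_succ_iff.1 (Finset.mem_range.1 hi))).mul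
        (hb j (Nat.lt_succ_iff.1 (Finset.mem_range.1 hj)))) (i + j)
  obtain ⟨R, c, hc, h⟩ := key
  refine ⟨R, c, hc, fun m hm x hx y hy => ?_⟩
  rw [← h m hm x hx y hy]
  dsimp only
  rw [hU m hm x hx, hV m hm y hy, Finset.sum_mul_sum]
  exact Finset.sum_congr rfl fun i _ => Finset.sum_congr rfl fun j _ => by ring

/-! ### The product expansion -/

/-- Sorting a double sum by the total exponent `a + b`: the terms with `a + b ≤ L` and the rest. -/
lemma sum_mul_sum_by_degree (L : ℕ) (t : ℂ) (a b : ℕ → ℂ) :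
    (∑ i ∈ Finset.range (L + 1), t ^ i * a i) * (∑ j ∈ Finset.range (L + 1), t ^ j * b j) =
      ∑ l ∈ Finset.range (L + 1), t ^ l *
        (∑ i ∈ Finset.range (L + 1), ∑ j ∈ Finset.range (L + 1),
          if i + j = l then a i * b j else 0) +
      ∑ i ∈ Finset.range (L + 1), ∑ j ∈ Finset.range (L + 1),
        if i + j ≤ L then 0 else (t ^ i * a i) * (t ^ j * b j) := by
  rw [Finset.sum_mul_sum]
  simp only [Finset.mul_sum]
  rw [Finset.sum_comm (s := Finset.range (L + 1)) (t := Finset.range (L + 1))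
    (f := fun l i => ∑ j ∈ Finset.range (L + 1), t ^ l * if i + j = l then a i * b j else 0),
    ← Finset.sum_add_distrib]
  refine Finset.sum_congr rfl fun i _ => ?_
  rw [Finset.sum_comm, ← Finset.sum_add_distrib]
  refine Finset.sum_congr rfl fun j _ => ?_
  simp only [mul_ite, mul_zero, Finset.sum_ite_eq, Finset.mem_range, Nat.lt_succ_iff]
  split_ifs
  · ring
  · ring

/-- if `f₁^{(m)}` fulfils the sm-expansion with degree `D₁` and `f₂^{(m)}`
fulfils the sm-expansion with degree `D₂` (same mass scale `M > 0`), then the product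
family `F^{(m)}(x,y) := f₁^{(m)}(x) · f₂^{(m)}(y)` fulfils the sm-expansion with
degree `D₁ + D₂` on the product domain. -/
theorem smExpansion_mul (k₁ k₂ : ℕ) (M D₁ D₂ : ℝ) (hM : 0 < M)
    (f₁ : ℝ → (Fin k₁ → ℝ) → ℂ) (f₂ : ℝ → (Fin k₂ → ℝ) → ℂ)
    (hf₁ : SMExpansion k₁ M D₁ f₁) (hf₂ : SMExpansion k₂ M D₂ f₂) :
    SMExpansion2 k₁ k₂ M (D₁ + D₂)
      (fun (m : ℝ) (x : Fin k₁ → ℝ) (y : Fin k₂ → ℝ) => f₁ m x * f₂ m y) := by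
  intro L
  obtain ⟨u, r, hfu, hA, hB, hD, hE⟩ := hf₁ L
  obtain ⟨v, s, hfv, hA', hB', hD', hE'⟩ := hf₂ L
  have hU : ∀ a ∈ Finset.range (L + 1), MassPoly k₁ M ((D₁ : ℂ) - a) (u a) :=
    fun a ha => hB a (Nat.lt_succ_iff.1 (Finset.mem_range.1 ha))
  have hV : ∀ b ∈ Finset.range (L + 1), MassPoly k₂ M ((D₂ : ℂ) - b) (v b) :=
    fun b hb => hB' b (Nat.lt_succ_iff.1 (Finset.mem_range.1 hb))
  refine ⟨fun l m x y => ∑ a ∈ Finset.range (L + 1), ∑ b ∈ Finset.range (L + 1),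
      if a + b = l then u a m x * v b m y else 0,
    fun m x y =>
      (∑ a ∈ Finset.range (L + 1), ∑ b ∈ Finset.range (L + 1),
        if a + b ≤ L then 0 else ((m : ℂ) ^ a * u a m x) * ((m : ℂ) ^ b * v b m y)) +
      (∑ a ∈ Finset.range (L + 1), (m : ℂ) ^ a * u a m x) * s m y +
      r m x * (∑ b ∈ Finset.range (L + 1), (m : ℂ) ^ b * v b m y) +
      r m x * s m y, ?_, ?_, ?_, ?_, ?_⟩
  · intro m hm x hx y hy
    have h := sum_mul_sum_by_degree L (m : ℂ) (fun a => u a m x) (fun b => v b m y)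
    dsimp only
    rw [hfu m hm x hx, hfv m hm y hy]
    linear_combination h
  · intro m m' hm hm'
    funext x y
    refine Finset.sum_congr rfl fun a _ => Finset.sum_congr rfl fun b _ => ?_
    -- only `a = b = 0` contributes, and there (A) holds for both factors
    by_cases h : a + b = 0
    · obtain ⟨rfl, rfl⟩ : a = 0 ∧ b = 0 := by omega
      simp [hA m m' hm hm', hA' m m' hm hm']
    · rw [if_neg h, if_neg h]
  · intro l _
    refine MassPoly2.sum _ fun a ha => MassPoly2.sum _ fun b hb => ?_
    by_cases h : a + b = l
    · have := (hU a ha).mul (hV b hb)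
      simp only [h, if_true]
      rw [show (((D₁ + D₂ : ℝ) : ℂ) - (l : ℂ)) = (D₁ - a) + (D₂ - b) by
        rw [← h]; push_cast; ring]
      exact this
    · simp only [h, if_false]
      exact MassPoly2.zero
  · have hu := fun a ha => (hU a ha).almostHomogeneousXM hM
    have hv := fun b hb => (hV b hb).almostHomogeneousXM hM
    rw [Complex.ofReal_add]
    refine AlmostHomogeneousXM2.add (AlmostHomogeneousXM2.add (AlmostHomogeneousXM2.add ?_
      ((AlmostHomogeneousXM.sum _ hu).mul hD')) (hD.mul (AlmostHomogeneousXM.sum _ hv)))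
      (hD.mul hD')
    refine AlmostHomogeneousXM2.sum _ fun a ha => AlmostHomogeneousXM2.sum _ fun b hb => ?_
    by_cases h : a + b ≤ L
    · simp only [h, if_true]
      -- the zero family, as an empty sum
      simpa using AlmostHomogeneousXM2.sum (w := (D₁ : ℂ) + D₂) (k₁ := k₁) (k₂ := k₂)
        (∅ : Finset ℕ) (f := fun _ _ _ _ => 0) (by simp)
    · simp only [h, if_false]
      exact (hu a ha).mul (hv b hb)
  · intro x hx y hy
    have hu := fun a ha => (hU a ha).vanishOrder hM a hx
    have hv := fun b hb => (hV b hb).vanishOrder hM b hy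
    have hr : VanishOrder M (L + 1) (fun m => r m x) := hE x hx
    have hs : VanishOrder M (L + 1) (fun m => s m y) := hE' y hy
    have hL : (0 : ℝ) ≤ L + 1 := by positivity
    have hu0 : VanishOrder M 0 (fun m => ∑ a ∈ Finset.range (L + 1), (m : ℂ) ^ a * u a m x) :=
      VanishOrder.sum _ fun a ha => (hu a ha).mono (Nat.cast_nonneg a)
    have hv0 : VanishOrder M 0 (fun m => ∑ b ∈ Finset.range (L + 1), (m : ℂ) ^ b * v b m y) :=
      VanishOrder.sum _ fun b hb => (hv b hb).mono (Nat.cast_nonneg b)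
    refine VanishOrder.add (VanishOrder.add (VanishOrder.add ?_
      ((hu0.mul hM hs).mono (by linarith))) ((hr.mul hM hv0).mono (by linarith)))
      ((hr.mul hM hs).mono (by linarith))
    refine VanishOrder.sum _ fun a ha => VanishOrder.sum _ fun b hb => ?_
    by_cases h : a + b ≤ L
    · simp only [h, if_true]
      exact VanishOrder.zero
    · simp only [h, if_false]
      refine ((hu a ha).mul hM (hv b hb)).mono ?_
      exact_mod_cast Nat.lt_of_not_le h
end
end

section
/- The sm-expansion is unique: let M>0, D ∈ ℝ, L ∈ ℕ₀ and let f^{(m)} : ℝᵏ∖{0} → ℂ (m>0) be a family which admits two expansions f^{(m)}(x) = Σ_{l=0}^L m^l u_l^{(m)}(x) + r_{L+1}^{(m)}(x) = Σ_{l=0}^L m^l ũ_l^{(m)}(x) + r̃_{L+1}^{(m)}(x), where both sets of data satisfy properties (A), (B) and (E) of the sm-expansion with degree D. Then u_l^{(m)}(x) = ũ_l^{(m)}(x) for all 0 ≤ l ≤ L, all m>0 and all x≠0, and consequently r_{L+1}^{(m)} = r̃_{L+1}^{(m)}. -/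
/-!
The argument is carried out separately at each point `x ≠ 0`. With `m = M e^{-s}`, property (B) turns
`m ^ l * (u l m x - u' l m x)` into `e^{-ls} v_l(s)` for a complex polynomial `v_l`, and the
difference `g` of the remainders is then equal to `∑_{l ≤ L} e^{-ls} v_l(s)` for every real `s`. Property (E) with
`ε = L + 1 - l` gives `e^{ls} g(s) → 0` as `s → ∞` for each `l ≤ L`.

In the limit `s → ∞` every term with `l ≥ 1` vanishes, hence so does `v_0(s)`, and a polynomial
tending to `0` along the reals is the zero polynomial (`eq_zero_of_tendsto_eval`). Dividing by `e^{-s}`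
reduces `L` by one, so all the `v_l` vanish by induction (`coeff_eq_zero_of_expansion`).
-/


noncomputable section
open Filter Topology Finset

open Polynomial in
lemma eq_zero_of_tendsto_eval (q : ℂ[X])
    (h : Tendsto (fun s : ℝ => q.eval (s : ℂ)) atTop (𝓝 0)) : q = 0 := by
  by_cases hd : 0 < q.degree
  · have h1 : Tendsto (fun s : ℝ => ‖q.eval (s : ℂ)‖) atTop atTop :=
      q.tendsto_norm_atTop hd (by simpa using tendsto_abs_atTop_atTop)
    exact absurd h.norm (not_tendsto_nhds_of_tendsto_atTop h1 _)
  · rw [eq_C_of_degree_le_zero (not_lt.mp hd)] at h ⊢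
    simp only [eval_C] at h
    rw [tendsto_nhds_unique tendsto_const_nhds h, C_0]

open Polynomial in
lemma tendsto_exp_neg_pow_mul_eval (l : ℕ) (q : ℂ[X]) :
    Tendsto (fun s : ℝ => (Real.exp (-s) : ℂ) ^ (l + 1) * q.eval (s : ℂ)) atTop (𝓝 0) := by
  induction q using Polynomial.induction_on' with
  | add p q hp hq => simpa [mul_add] using hp.add hq
  | monomial n a =>
    have h1 := Real.tendsto_pow_mul_exp_neg_atTop_nhds_zero n
    have h2 : Tendsto (fun s : ℝ => Real.exp (-s) ^ l * (s ^ n * Real.exp (-s))) atTop (𝓝 0) := by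
      refine squeeze_zero_norm' ?_ h1
      filter_upwards [eventually_ge_atTop (0 : ℝ)] with s hs
      have h3 : Real.exp (-s) ^ l ≤ 1 :=
        pow_le_one₀ (Real.exp_pos _).le (Real.exp_le_one_iff.mpr (by linarith))
      rw [Real.norm_of_nonneg (by positivity)]
      exact mul_le_of_le_one_left (by positivity) h3
    have h3 := ((Complex.continuous_ofReal.tendsto 0).comp h2).mul_const a
    simp only [Complex.ofReal_zero, zero_mul] at h3
    refine h3.congr fun s => ?_
    simp only [Function.comp, eval_monomial]
    push_cast
    ring

open Polynomial in
/-- Exponential polynomials `∑_{l ≤ L} e^{-ls} v_l(s)` that decay faster than `e^{-Ls}` (together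
with the weaker rates `e^{-ls}`, which keeps the induction on `L` simple) have zero coefficients. -/
lemma coeff_eq_zero_of_expansion (L : ℕ) (v : ℕ → ℂ[X]) (g : ℝ → ℂ)
    (hsum : ∀ s : ℝ, ∑ l ∈ Finset.range (L + 1), (Real.exp (-s) : ℂ) ^ l * (v l).eval (s : ℂ) = g s)
    (hg : ∀ l ≤ L, Tendsto (fun s : ℝ => (Real.exp s : ℂ) ^ l * g s) atTop (𝓝 0)) :
    ∀ l ≤ L, v l = 0 := by
  induction L generalizing v g with
  | zero =>
    intro l hl
    obtain rfl : l = 0 := by omega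
    refine eq_zero_of_tendsto_eval _ ((hg 0 le_rfl).congr fun s => ?_)
    simp [← hsum s]
  | succ L ih =>
    have h0 : v 0 = 0 := by
      apply eq_zero_of_tendsto_eval
      have ht : Tendsto (fun s : ℝ => ∑ l ∈ Finset.range (L + 1),
          (Real.exp (-s) : ℂ) ^ (l + 1) * (v (l + 1)).eval (s : ℂ)) atTop (𝓝 0) := by
        simpa using tendsto_finsetSum (Finset.range (L + 1))
          fun l _ => tendsto_exp_neg_pow_mul_eval l (v (l + 1))
      have h1 := (hg 0 (Nat.zero_le _)).sub ht
      rw [sub_zero] at h1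
      refine h1.congr fun s => ?_
      rw [← hsum s, Finset.sum_range_succ']
      simp
    have h1 := ih (fun l => v (l + 1)) (fun s => (Real.exp s : ℂ) * g s) ?_ ?_
    · intro l hl
      cases l with
      | zero => exact h0
      | succ l => exact h1 l (by omega)
    · intro s
      have he : (Real.exp s : ℂ) * (Real.exp (-s) : ℂ) = 1 := by
        rw [← Complex.ofReal_mul, ← Real.exp_add]; simp
      rw [← hsum s, Finset.sum_range_succ' _ (L + 1), h0]
      simp only [eval_zero, mul_zero, add_zero, Finset.mul_sum]
      refine Finset.sum_congr rfl fun l _ => ?_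
      rw [pow_succ]
      linear_combination (-(Real.exp (-s) : ℂ) ^ l * (v (l + 1)).eval (s : ℂ)) * he
    · intro l hl
      refine (hg (l + 1) (by omega)).congr fun s => ?_
      ring

/-- uniqueness of the sm-expansion.  If a family `f^{(m)}` admits two
expansions `f^{(m)}(x) = Σ_{l=0}^L m^l u_l^{(m)}(x) + r^{(m)}(x)
= Σ_{l=0}^L m^l u'_l^{(m)}(x) + r'^{(m)}(x)`, both satisfying properties (A), (B)
and (E) of the sm-expansion (with degree `D`, mass scale `M > 0`), then
`u_l^{(m)}(x) = u'_l^{(m)}(x)` for all `0 ≤ l ≤ L`, `m > 0`, `x ≠ 0`, and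
consequently the remainders coincide. -/
theorem smExpansion_unique (k : ℕ) (M D : ℝ) (hM : 0 < M) (L : ℕ)
    (f : ℝ → (Fin k → ℝ) → ℂ)
    (u u' : ℕ → ℝ → (Fin k → ℝ) → ℂ) (r r' : ℝ → (Fin k → ℝ) → ℂ)
    -- the two expansions
    (hexp : ∀ m : ℝ, 0 < m → ∀ x : Fin k → ℝ, x ≠ 0 →
      f m x = ∑ l ∈ Finset.range (L + 1), (m : ℂ) ^ l * u l m x + r m x)
    (hexp' : ∀ m : ℝ, 0 < m → ∀ x : Fin k → ℝ, x ≠ 0 →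
      f m x = ∑ l ∈ Finset.range (L + 1), (m : ℂ) ^ l * u' l m x + r' m x)
    -- (A) for both
    (hA : ∀ m m' : ℝ, 0 < m → 0 < m' → u 0 m = u 0 m')
    (hA' : ∀ m m' : ℝ, 0 < m → 0 < m' → u' 0 m = u' 0 m')
    -- (B) for both
    (hB : ∀ l : ℕ, l ≤ L → ∃ P : ℕ, ∃ up : ℕ → (Fin k → ℝ) → ℂ,
      ∀ m : ℝ, 0 < m → ∀ x : Fin k → ℝ, x ≠ 0 →
        u l m x = ∑ p ∈ Finset.range (P + 1), (Real.log (m / M) : ℂ) ^ p * up p x)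
    (hB' : ∀ l : ℕ, l ≤ L → ∃ P : ℕ, ∃ up : ℕ → (Fin k → ℝ) → ℂ,
      ∀ m : ℝ, 0 < m → ∀ x : Fin k → ℝ, x ≠ 0 →
        u' l m x = ∑ p ∈ Finset.range (P + 1), (Real.log (m / M) : ℂ) ^ p * up p x)
    -- (E) for both
    (hE : ∀ x : Fin k → ℝ, x ≠ 0 →
      ContDiffOn ℝ (⊤ : ℕ∞) (fun m : ℝ => r m x) (Set.Ioi (0 : ℝ)) ∧
      ∀ ε : ℝ, 0 < ε →
        Tendsto (fun m : ℝ => (((m / M) ^ (-(L + 1 : ℝ) + ε) : ℝ) : ℂ) * r m x)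
          (𝓝[>] (0 : ℝ)) (𝓝 0))
    (hE' : ∀ x : Fin k → ℝ, x ≠ 0 →
      ContDiffOn ℝ (⊤ : ℕ∞) (fun m : ℝ => r' m x) (Set.Ioi (0 : ℝ)) ∧
      ∀ ε : ℝ, 0 < ε →
        Tendsto (fun m : ℝ => (((m / M) ^ (-(L + 1 : ℝ) + ε) : ℝ) : ℂ) * r' m x)
          (𝓝[>] (0 : ℝ)) (𝓝 0)) :
    (∀ l : ℕ, l ≤ L → ∀ m : ℝ, 0 < m → ∀ x : Fin k → ℝ, x ≠ 0 → u l m x = u' l m x) ∧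
    (∀ m : ℝ, 0 < m → ∀ x : Fin k → ℝ, x ≠ 0 → r m x = r' m x) := by
  have key : ∀ x : Fin k → ℝ, x ≠ 0 → ∀ l ≤ L, ∀ m : ℝ, 0 < m → u l m x = u' l m x := by
    intro x hx
    choose! P up hup using hB
    choose! P' up' hup' using hB'
    have hpos : ∀ s : ℝ, 0 < M * Real.exp (-s) := fun s => by positivity
    -- `q l` is the difference of the two coefficients, as a polynomial in `log (m / M)`.
    let q : ℕ → Polynomial ℂ := fun l =>
      ∑ p ∈ Finset.range (P l + 1), Polynomial.X ^ p * Polynomial.C (up l p x) -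
      ∑ p ∈ Finset.range (P' l + 1), Polynomial.X ^ p * Polynomial.C (up' l p x)
    have hq : ∀ l ≤ L, ∀ m : ℝ, 0 < m →
        u l m x - u' l m x = (q l).eval (Real.log (m / M) : ℂ) := by
      intro l hl m hm
      rw [hup l hl m hm x hx, hup' l hl m hm x hx]
      simp only [q, Polynomial.eval_sub, Polynomial.eval_finsetSum, Polynomial.eval_mul,
        Polynomial.eval_pow, Polynomial.eval_X, Polynomial.eval_C]
    have hdiv : ∀ s : ℝ, M * Real.exp (-s) / M = Real.exp (-s) := fun s => by field_simp
    have hv := coeff_eq_zero_of_expansion L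
      (fun l => Polynomial.C ((M : ℂ) ^ l) * (q l).comp (-Polynomial.X))
      (fun s => r' (M * Real.exp (-s)) x - r (M * Real.exp (-s)) x) ?_ ?_
    · intro l hl m hm
      have h1 := congrArg (Polynomial.eval (-(Real.log (m / M) : ℂ))) (hv l hl)
      have hM' : (M : ℂ) ^ l ≠ 0 := pow_ne_zero _ (by exact_mod_cast hM.ne')
      simp only [Polynomial.eval_mul, Polynomial.eval_C, Polynomial.eval_comp,
        Polynomial.eval_neg, Polynomial.eval_X, neg_neg, Polynomial.eval_zero, mul_eq_zero, hM',
        false_or] at h1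
      exact sub_eq_zero.mp ((hq l hl m hm).trans h1)
    · intro s
      have h1 := hexp _ (hpos s) x hx
      have h2 := hexp' _ (hpos s) x hx
      have h3 : ∑ l ∈ Finset.range (L + 1), (Real.exp (-s) : ℂ) ^ l *
            (Polynomial.C ((M : ℂ) ^ l) * (q l).comp (-Polynomial.X)).eval (s : ℂ) =
          ∑ l ∈ Finset.range (L + 1), ((M * Real.exp (-s) : ℝ) : ℂ) ^ l *
            (u l (M * Real.exp (-s)) x - u' l (M * Real.exp (-s)) x) := by
        refine Finset.sum_congr rfl fun l hl => ?_
        rw [hq l (Nat.lt_succ_iff.mp (Finset.mem_range.mp hl)) _ (hpos s), hdiv, Real.log_exp]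
        simp only [Polynomial.eval_mul, Polynomial.eval_C, Polynomial.eval_comp,
          Polynomial.eval_neg, Polynomial.eval_X, Complex.ofReal_mul, mul_pow, Complex.ofReal_neg]
        ring
      rw [h3]
      simp only [mul_sub, Finset.sum_sub_distrib]
      linear_combination h2 - h1
    · intro l hl
      have hm : Tendsto (fun s : ℝ => M * Real.exp (-s)) atTop (𝓝[>] 0) := by
        refine tendsto_nhdsWithin_iff.mpr ⟨?_, Eventually.of_forall hpos⟩
        simpa using Real.tendsto_exp_neg_atTop_nhds_zero.const_mul M
      have hl' : (l : ℝ) ≤ L := by exact_mod_cast hl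
      -- This `ε` makes the exponent in (E) equal to `-l`.
      have hε : (0 : ℝ) < L + 1 - l := by linarith
      have h1 := (((hE' x hx).2 _ hε).comp hm).sub (((hE x hx).2 _ hε).comp hm)
      rw [sub_zero] at h1
      refine h1.congr fun s => ?_
      have h2 : Real.exp (-s) ^ (-(L + 1 : ℝ) + (L + 1 - l)) = Real.exp s ^ l := by
        rw [← Real.exp_mul, ← Real.exp_nat_mul]
        congr 1
        ring
      simp only [Function.comp, hdiv, h2, Complex.ofReal_pow]
      ring
  refine ⟨fun l hl m hm x hx => key x hx l hl m hm, fun m hm x hx => ?_⟩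
  have h1 := (hexp m hm x hx).symm.trans (hexp' m hm x hx)
  rw [Finset.sum_congr rfl fun l hl => by
    rw [key x hx l (Nat.lt_succ_iff.mp (Finset.mem_range.mp hl)) m hm]] at h1
  exact add_left_cancel h1
end
end

section
/- Linear independence of the functions m^l (log(m/M))^p relative to small remainders: let L, P ∈ ℕ₀, M>0, and let a_{l,p} ∈ ℂ for 0 ≤ l ≤ L and 0 ≤ p ≤ P. Suppose that for every ε>0, lim_{m↓0} m^{−(L+1)+ε} · Σ_{l=0}^{L} Σ_{p=0}^{P} a_{l,p} m^l (log(m/M))^p = 0. Then a_{l,p} = 0 for all l, p. -/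
noncomputable section
open Filter Topology Finset

/-!
The coefficients are eliminated in order of increasing `l`. Only `ε = 1/2` is needed: it makes the
double sum `o(m ^ (L + 1/2))`, hence `o(m ^ l)` for each `l ≤ L`. If all coefficients with index
below `l` vanish, dividing by `m ^ l` leaves the polynomial `∑ p, a l p * X ^ p` evaluated at
`log (m / M)`, plus terms of the form `m ^ (k - l) * log (m / M) ^ p` with `k > l`, which tend to
`0` (`tendsto_pow_mul_log_pow`). So this polynomial tends to `0` while its argument tends to `-∞`,
which forces it to be zero (`polynomial_eq_zero_of_tendsto_log`).
-/

lemma tendsto_log_div_atBot (M : ℝ) (hM : 0 < M) :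
    Tendsto (fun m : ℝ => Real.log (m / M)) (𝓝[>] (0 : ℝ)) atBot := by
  refine Real.tendsto_log_nhdsGT_zero.comp ?_
  refine tendsto_nhdsWithin_iff.2 ⟨?_, ?_⟩
  · have : Tendsto (fun m : ℝ => m / M) (𝓝 0) (𝓝 (0 / M)) := tendsto_id.div_const M
    rw [zero_div] at this
    exact this.mono_left nhdsWithin_le_nhds
  · filter_upwards [self_mem_nhdsWithin] with m hm
    exact div_pos hm hM

lemma polynomial_eq_zero_of_tendsto_log (M : ℝ) (hM : 0 < M) (q : Polynomial ℂ)
    (h : Tendsto (fun m : ℝ => q.eval (Real.log (m / M) : ℂ)) (𝓝[>] (0 : ℝ)) (𝓝 0)) :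
    q = 0 := by
  by_cases hd : 0 < q.degree
  · have hz : Tendsto (fun m : ℝ => ‖(Real.log (m / M) : ℂ)‖) (𝓝[>] (0 : ℝ)) atTop := by
      simp only [Complex.norm_real, Real.norm_eq_abs]
      exact tendsto_abs_atBot_atTop.comp (tendsto_log_div_atBot M hM)
    exact absurd h.norm
      (not_tendsto_nhds_of_tendsto_atTop (q.tendsto_norm_atTop hd hz) _)
  · rw [Polynomial.eq_C_of_degree_le_zero (not_lt.1 hd)] at h ⊢
    simp only [Polynomial.eval_C] at h
    rw [tendsto_nhds_unique tendsto_const_nhds h, Polynomial.C_0]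

lemma tendsto_pow_mul_log_pow (M : ℝ) (hM : 0 < M) (j p : ℕ) :
    Tendsto (fun m : ℝ => (m : ℂ) ^ (j + 1) * (Real.log (m / M) : ℂ) ^ p)
      (𝓝[>] (0 : ℝ)) (𝓝 0) := by
  have h1 := (Real.tendsto_pow_mul_exp_neg_atTop_nhds_zero p).comp
    (tendsto_neg_atBot_atTop.comp (tendsto_log_div_atBot M hM))
  have h2 : Tendsto (fun m : ℝ => m ^ j * (M * (-1) ^ p)) (𝓝[>] (0 : ℝ))
      (𝓝 (0 ^ j * (M * (-1) ^ p))) :=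
    Tendsto.mono_left (Continuous.tendsto (by fun_prop) 0) nhdsWithin_le_nhds
  have h3 := h2.mul h1
  rw [mul_zero] at h3
  have h4 : Tendsto (fun m : ℝ => m ^ (j + 1) * Real.log (m / M) ^ p) (𝓝[>] (0 : ℝ)) (𝓝 0) := by
    refine h3.congr' ?_
    filter_upwards [self_mem_nhdsWithin] with m hm
    have hs : ((-1 : ℝ) ^ p) * (-1) ^ p = 1 := by rw [← mul_pow]; norm_num
    simp only [Function.comp, neg_neg]
    rw [Real.exp_log (div_pos hm hM), neg_pow]
    calc _ = ((-1 : ℝ) ^ p * (-1) ^ p) * (m ^ j * (M * (m / M)) * Real.log (m / M) ^ p) := by ring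
      _ = _ := by rw [hs, mul_div_cancel₀ _ hM.ne']; ring
  simpa [Function.comp_def] using (Complex.continuous_ofReal.tendsto 0).comp h4

/-- linear independence of the functions `m^l (log (m/M))^p` relative to
small remainders.  If for every `ε > 0` one has
`lim_{m↓0} m^{-(L+1)+ε} · Σ_{l=0}^L Σ_{p=0}^P a_{l,p} m^l (log (m/M))^p = 0`,
then all of the `a_{l,p}` vanish. -/
theorem log_pow_linear_independent (L P : ℕ) (M : ℝ) (hM : 0 < M) (a : ℕ → ℕ → ℂ)
    (h : ∀ ε : ℝ, 0 < ε →
      Tendsto (fun m : ℝ => ((m ^ (-(L + 1 : ℝ) + ε) : ℝ) : ℂ) *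
          ∑ l ∈ Finset.range (L + 1), ∑ p ∈ Finset.range (P + 1),
            a l p * (m : ℂ) ^ l * (Real.log (m / M) : ℂ) ^ p)
        (𝓝[>] (0 : ℝ)) (𝓝 0)) :
    ∀ l : ℕ, l ≤ L → ∀ p : ℕ, p ≤ P → a l p = 0 := by
  intro l
  induction l using Nat.strong_induction_on with
  | _ l ih =>
  intro hl
  have hlR : (l : ℝ) ≤ L := by exact_mod_cast hl
  -- The double sum is `o(m ^ l)`: the surplus factor `m ^ (L - l + 1/2)` tends to `0`.
  have hsum : Tendsto (fun m : ℝ => ((m : ℂ) ^ l)⁻¹ *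
      ∑ k ∈ Finset.range (L + 1), ∑ p ∈ Finset.range (P + 1),
        a k p * (m : ℂ) ^ k * (Real.log (m / M) : ℂ) ^ p) (𝓝[>] (0 : ℝ)) (𝓝 0) := by
    have hr : Tendsto (fun m : ℝ => m ^ ((L : ℝ) - l + 1 / 2)) (𝓝[>] (0 : ℝ)) (𝓝 0) := by
      have hpos : 0 < (L : ℝ) - l + 1 / 2 := by linarith
      have := (Real.continuousAt_rpow_const 0 _ (Or.inr hpos.le)).tendsto
      rw [Real.zero_rpow hpos.ne'] at this
      exact this.mono_left nhdsWithin_le_nhds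
    have hrC := (Complex.continuous_ofReal.tendsto 0).comp hr
    have hprod := hrC.mul (h (1 / 2) (by norm_num))
    rw [mul_zero] at hprod
    refine hprod.congr' ?_
    filter_upwards [self_mem_nhdsWithin] with m hm
    have hm : 0 < m := hm
    simp only [Function.comp]
    rw [← mul_assoc, ← Complex.ofReal_mul, ← Real.rpow_add hm]
    have he : (L : ℝ) - l + 1 / 2 + (-(L + 1 : ℝ) + 1 / 2) = -(l : ℝ) := by ring
    rw [he, Real.rpow_neg hm.le, Real.rpow_natCast]
    push_cast
    rfl
  have hrest : Tendsto (fun m : ℝ => ∑ k ∈ (Finset.range (L + 1)).erase l,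
      ∑ p ∈ Finset.range (P + 1),
        ((m : ℂ) ^ l)⁻¹ * (a k p * (m : ℂ) ^ k * (Real.log (m / M) : ℂ) ^ p))
      (𝓝[>] (0 : ℝ)) (𝓝 0) := by
    rw [← Finset.sum_const_zero (s := (Finset.range (L + 1)).erase l) (M := ℂ)]
    refine tendsto_finsetSum _ fun k hk => ?_
    rw [← Finset.sum_const_zero (s := Finset.range (P + 1)) (M := ℂ)]
    refine tendsto_finsetSum _ fun p hp => ?_
    have hkl := Finset.ne_of_mem_erase hk
    rcases lt_or_gt_of_ne hkl with hlt | hgt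
    · simp [ih k hlt (by omega) p (Nat.lt_succ_iff.1 (Finset.mem_range.1 hp))]
    · obtain ⟨j, rfl⟩ : ∃ j, k = l + (j + 1) := ⟨k - l - 1, by omega⟩
      have := (tendsto_pow_mul_log_pow M hM j p).const_mul (a (l + (j + 1)) p)
      rw [mul_zero] at this
      refine this.congr' ?_
      filter_upwards [self_mem_nhdsWithin] with m hm
      have hm0 : (m : ℂ) ≠ 0 := Complex.ofReal_ne_zero.2 (ne_of_gt hm)
      rw [pow_add (m : ℂ) l]
      field_simp
  set q : Polynomial ℂ :=
    ∑ p ∈ Finset.range (P + 1), Polynomial.C (a l p) * Polynomial.X ^ p with hq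
  have hq0 : q = 0 := by
    refine polynomial_eq_zero_of_tendsto_log M hM q ?_
    have hdiff := hsum.sub hrest
    rw [sub_zero] at hdiff
    refine hdiff.congr' ?_
    filter_upwards [self_mem_nhdsWithin] with m hm
    have hm0 : (m : ℂ) ≠ 0 := Complex.ofReal_ne_zero.2 (ne_of_gt hm)
    simp only [Finset.mul_sum]
    rw [← Finset.add_sum_erase _ _ (Finset.mem_range.2 (Nat.lt_succ_of_le hl)),
      add_sub_cancel_right, hq, Polynomial.eval_finsetSum]
    refine Finset.sum_congr rfl fun p _ => ?_
    simp only [Polynomial.eval_mul, Polynomial.eval_C, Polynomial.eval_pow, Polynomial.eval_X]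
    field_simp
  intro p hp
  have hc : q.coeff p = a l p := by
    simp [hq, Polynomial.coeff_X_pow]
    omega
  rw [← hc, hq0, Polynomial.coeff_zero]
end
end

section
/- Scaling degree of the remainder of the sm-expansion: let D ∈ ℝ, L ∈ ℕ₀, M>0, and let r^{(m)} : ℝᵏ∖{0} → ℂ (m>0) be a family which (D) is almost homogeneous with degree D and some finite power under the scaling (x,m) ↦ (ρx, m/ρ), and (E) is such that for each x≠0 the map m ↦ r^{(m)}(x) is smooth on (0,∞) and lim_{m↓0} (m/M)^{−(L+1)+ε} r^{(m)}(x) = 0 for every ε>0. Then for every fixed m>0, every x≠0 and every ε>0, lim_{ρ↓0} ρ^{D−(L+1)+ε} r^{(m)}(ρx) = 0; in particular the Steinmann scaling degree of r^{(m)}, defined as sd(r^{(m)}) := inf{ s ∈ ℝ : lim_{ρ↓0} ρ^s r^{(m)}(ρx) = 0 for all x≠0 }, satisfies sd(r^{(m)}) ≤ D − (L+1). -/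
/-!
Replacing `m` by `ρ m` in the scaling relation gives
`ρ^D r^{(m)}(ρ x) = ∑ⱼ (log ρ)^j c_j^{(ρ m)}(x)`, so it suffices that each coefficient
`c_j^{(μ)}(x)` decays, as `μ ↓ 0`, as fast as `r^{(μ)}` itself does: the logarithms cost only an
arbitrarily small power of `ρ` (`tendsto_rpow_mul_log_pow`).

The decay of the coefficients (`coeff_decay`) follows from the scaling relation at the finitely many
fixed scales `ρ = e^i`, `0 ≤ i < N`. There it reads `e^{iD} r^{(μ/e^i)}(e^i x) = ∑ⱼ i^j c_j^{(μ)}(x)`,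
a linear system with invertible Vandermonde matrix. Hence each `c_j^{(μ)}(x)` is a combination, with
constants independent of `μ`, of the values `r^{(μ/e^i)}(e^i x)`, to which the assumed decay at the
points `e^i x ≠ 0` applies.
-/

noncomputable section
open Filter Topology Finset

lemma cpow_ofReal_eq_rpow {ρ : ℝ} (hρ : 0 < ρ) (D : ℝ) :
    cpow ρ (D : ℂ) = ((ρ ^ D : ℝ) : ℂ) := by
  rw [cpow, Real.rpow_def_of_pos hρ]
  push_cast
  rw [mul_comm]

lemma tendsto_rpow_mul_log_pow (j : ℕ) {δ : ℝ} (hδ : 0 < δ) :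
    Tendsto (fun ρ : ℝ => ρ ^ δ * Real.log ρ ^ j) (𝓝[>] (0 : ℝ)) (𝓝 0) := by
  have h := (isLittleO_abs_log_rpow_rpow_nhdsGT_zero (j : ℝ)
    (neg_lt_zero.mpr hδ)).tendsto_div_nhds_zero
  rw [tendsto_zero_iff_abs_tendsto_zero]
  refine h.congr' ?_
  filter_upwards [self_mem_nhdsWithin] with ρ hρ
  have hρ : 0 < ρ := hρ
  simp only [Function.comp, Real.rpow_natCast, Real.rpow_neg hρ.le, div_inv_eq_mul, abs_mul,
    abs_pow, abs_of_pos (Real.rpow_pos_of_pos hρ δ)]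
  ring

/-- Polynomial coefficients are controlled by the values at the nodes `0, …, N - 1`: if all the
values `∑ⱼ i^j c_j`, weighted by `g`, tend to zero along a filter, then so do the weighted `c_j`. -/
lemma tendsto_coeff_of_tendsto_values {α : Type*} {l : Filter α} (N : ℕ) (g : α → ℂ)
    (c : ℕ → α → ℂ)
    (h : ∀ i : ℕ, Tendsto (fun a => g a * ∑ j ∈ Finset.range N, (i : ℂ) ^ j * c j a) l (𝓝 0))
    {j : ℕ} (hj : j < N) : Tendsto (fun a => g a * c j a) l (𝓝 0) := by
  set V : Matrix (Fin N) (Fin N) ℂ := Matrix.vandermonde fun i : Fin N => ((i : ℕ) : ℂ) with hV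
  have hdet : IsUnit V.det := by
    refine isUnit_iff_ne_zero.mpr (Matrix.det_vandermonde_ne_zero_iff.mpr ?_)
    intro a b hab
    exact Fin.ext (Nat.cast_injective hab)
  have key : ∀ a, g a * c j a = ∑ i : Fin N, V⁻¹ ⟨j, hj⟩ i *
      (g a * ∑ j ∈ Finset.range N, ((i : ℕ) : ℂ) ^ j * c j a) := by
    intro a
    have h1 : V.mulVec (fun j : Fin N => c j a) =
        fun i : Fin N => ∑ j ∈ Finset.range N, ((i : ℕ) : ℂ) ^ j * c j a := by
      funext i
      simp [hV, Matrix.mulVec, dotProduct, Matrix.vandermonde_apply, Finset.sum_range]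
    have h2 : V⁻¹.mulVec (V.mulVec (fun j : Fin N => c j a)) = fun j : Fin N => c j a := by
      rw [Matrix.mulVec_mulVec, Matrix.nonsing_inv_mul _ hdet, Matrix.one_mulVec]
    rw [h1] at h2
    have h3 := congrFun h2 ⟨j, hj⟩
    simp only [Matrix.mulVec, dotProduct] at h3
    rw [← h3, Finset.mul_sum]
    exact Finset.sum_congr rfl fun i _ => by ring
  simp_rw [key]
  have := tendsto_finsetSum (Finset.univ : Finset (Fin N))
    (fun i _ => (h (i : ℕ)).const_mul (V⁻¹ ⟨j, hj⟩ i))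
  simpa using this

/-- The coefficients of the scaling relation inherit the small-mass decay of `r`. -/
lemma coeff_decay {k N : ℕ} {D M a : ℝ} (hM : 0 < M) {r : ℝ → (Fin k → ℝ) → ℂ}
    {c : ℕ → ℝ → (Fin k → ℝ) → ℂ}
    (hc : ∀ ρ : ℝ, 0 < ρ → ∀ m : ℝ, 0 < m → ∀ x : Fin k → ℝ, x ≠ 0 →
      cpow ρ D * r (m / ρ) (ρ • x) = ∑ j ∈ Finset.range N, (Real.log ρ : ℂ) ^ j * c j m x)
    (hr : ∀ x : Fin k → ℝ, x ≠ 0 →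
      Tendsto (fun m : ℝ => (((m / M) ^ a : ℝ) : ℂ) * r m x) (𝓝[>] (0 : ℝ)) (𝓝 0))
    {x : Fin k → ℝ} (hx : x ≠ 0) {j : ℕ} (hj : j < N) :
    Tendsto (fun m : ℝ => ((m ^ a : ℝ) : ℂ) * c j m x) (𝓝[>] (0 : ℝ)) (𝓝 0) := by
  refine tendsto_coeff_of_tendsto_values N _ (fun j m => c j m x) (fun i => ?_) hj
  set ρ : ℝ := Real.exp i with hρdef
  have hρ : 0 < ρ := Real.exp_pos _
  have hdiv : Tendsto (fun m : ℝ => m / ρ) (𝓝[>] (0 : ℝ)) (𝓝[>] (0 : ℝ)) := by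
    refine tendsto_nhdsWithin_iff.mpr ⟨?_, ?_⟩
    · have : Tendsto (fun m : ℝ => m / ρ) (𝓝 0) (𝓝 (0 / ρ)) := tendsto_id.div_const ρ
      rw [zero_div] at this
      exact this.mono_left nhdsWithin_le_nhds
    · filter_upwards [self_mem_nhdsWithin] with m hm
      exact div_pos hm hρ
  have h := ((hr (ρ • x) (smul_ne_zero hρ.ne' hx)).comp hdiv).const_mul
    ((((ρ * M) ^ a : ℝ) : ℂ) * cpow ρ D)
  rw [mul_zero] at h
  refine h.congr' ?_
  filter_upwards [self_mem_nhdsWithin] with m hm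
  have hm : 0 < m := hm
  have hsum := hc ρ hρ m hm x hx
  rw [hρdef, Real.log_exp, ← hρdef] at hsum
  push_cast at hsum
  have hpow : m ^ a = (ρ * M) ^ a * (m / ρ / M) ^ a := by
    rw [← Real.mul_rpow (by positivity) (by positivity)]
    congr 1
    field_simp
  rw [← hsum, hpow, Function.comp]
  push_cast
  ring

/-- scaling degree of the remainder of the sm-expansion.  If the family
`r^{(m)}` satisfies (D) (almost homogeneous with degree `D` and some finite power under
`(x,m) ↦ (ρx, m/ρ)`) and (E) (smoothness in `m > 0` and
`lim_{m↓0} (m/M)^{-(L+1)+ε} r^{(m)}(x) = 0` for all `ε > 0`), then for every fixed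
`m > 0`, `x ≠ 0` and `ε > 0` one has `lim_{ρ↓0} ρ^{D-(L+1)+ε} r^{(m)}(ρx) = 0`; in
particular the Steinmann scaling degree of `r^{(m)}` is at most `D - (L+1)`, i.e.
every `s > D - (L+1)` satisfies `lim_{ρ↓0} ρ^s r^{(m)}(ρx) = 0` for all `x ≠ 0`. -/
theorem smExpansion_remainder_scaling_degree (k : ℕ) (D M : ℝ) (hM : 0 < M) (L : ℕ)
    (r : ℝ → (Fin k → ℝ) → ℂ)
    (hD : AlmostHomogeneousXM k (D : ℂ) r)
    (hE : ∀ x : Fin k → ℝ, x ≠ 0 →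
      ContDiffOn ℝ (⊤ : ℕ∞) (fun m : ℝ => r m x) (Set.Ioi (0 : ℝ)) ∧
      ∀ ε : ℝ, 0 < ε →
        Tendsto (fun m : ℝ => (((m / M) ^ (-(L + 1 : ℝ) + ε) : ℝ) : ℂ) * r m x)
          (𝓝[>] (0 : ℝ)) (𝓝 0)) :
    ∀ m : ℝ, 0 < m →
      (∀ x : Fin k → ℝ, x ≠ 0 → ∀ ε : ℝ, 0 < ε →
        Tendsto (fun ρ : ℝ => ((ρ ^ (D - (L + 1 : ℝ) + ε) : ℝ) : ℂ) * r m (ρ • x))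
          (𝓝[>] (0 : ℝ)) (𝓝 0)) ∧
      (∀ s : ℝ, D - (L + 1 : ℝ) < s → ∀ x : Fin k → ℝ, x ≠ 0 →
        Tendsto (fun ρ : ℝ => ((ρ ^ s : ℝ) : ℂ) * r m (ρ • x))
          (𝓝[>] (0 : ℝ)) (𝓝 0)) := by
  obtain ⟨N, -, c, -, hc⟩ := hD
  intro m hm
  have main : ∀ x : Fin k → ℝ, x ≠ 0 → ∀ ε : ℝ, 0 < ε →
      Tendsto (fun ρ : ℝ => ((ρ ^ (D - (L + 1 : ℝ) + ε) : ℝ) : ℂ) * r m (ρ • x))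
        (𝓝[>] (0 : ℝ)) (𝓝 0) := by
    intro x hx ε hε
    -- Half of `ε` is spent on the decay of the coefficients, half on the powers of `log ρ`.
    set a : ℝ := -(L + 1 : ℝ) + ε / 2 with ha
    have hmul : Tendsto (fun ρ : ℝ => ρ * m) (𝓝[>] (0 : ℝ)) (𝓝[>] (0 : ℝ)) := by
      refine tendsto_nhdsWithin_iff.mpr ⟨?_, ?_⟩
      · have : Tendsto (fun ρ : ℝ => ρ * m) (𝓝 0) (𝓝 (0 * m)) := tendsto_id.mul_const m
        rw [zero_mul] at this
        exact this.mono_left nhdsWithin_le_nhds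
      · filter_upwards [self_mem_nhdsWithin] with ρ hρ
        exact mul_pos hρ hm
    have hterm : ∀ j ∈ Finset.range N, Tendsto (fun ρ : ℝ => ((m ^ (-a) : ℝ) : ℂ) *
        (((ρ ^ (ε / 2) * Real.log ρ ^ j : ℝ) : ℂ) *
          ((((ρ * m) ^ a : ℝ) : ℂ) * c j (ρ * m) x))) (𝓝[>] (0 : ℝ)) (𝓝 0) := by
      intro j hj
      have h1 := (coeff_decay hM hc (fun y hy => (hE y hy).2 (ε / 2) (half_pos hε)) hx
        (Finset.mem_range.mp hj)).comp hmul
      have h2 := (Complex.continuous_ofReal.tendsto 0).comp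
        (tendsto_rpow_mul_log_pow j (half_pos hε))
      simpa [Function.comp_def, ha] using (h2.mul h1).const_mul ((m ^ (-a) : ℝ) : ℂ)
    have hsum := tendsto_finsetSum (Finset.range N) hterm
    rw [Finset.sum_const_zero] at hsum
    refine hsum.congr' ?_
    filter_upwards [self_mem_nhdsWithin] with ρ hρ
    have hρ : 0 < ρ := hρ
    have h := hc ρ hρ (ρ * m) (mul_pos hρ hm) x hx
    rw [mul_div_cancel_left₀ m hρ.ne', cpow_ofReal_eq_rpow hρ] at h
    have hexp : D - (L + 1 : ℝ) + ε = (a + ε / 2) + D := by rw [ha]; ring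
    have hm1 : ((m ^ (-a) : ℝ) : ℂ) * ((m ^ a : ℝ) : ℂ) = 1 := by
      rw [← Complex.ofReal_mul, ← Real.rpow_add hm, neg_add_cancel, Real.rpow_zero,
        Complex.ofReal_one]
    rw [hexp, Real.rpow_add hρ, Complex.ofReal_mul, mul_assoc, h, Finset.mul_sum]
    refine Finset.sum_congr rfl fun j _ => ?_
    rw [Real.rpow_add hρ, Real.mul_rpow hρ.le hm.le]
    simp only [Complex.ofReal_mul, Complex.ofReal_pow]
    linear_combination (((ρ ^ (ε / 2) : ℝ) : ℂ) * (Real.log ρ : ℂ) ^ j * ((ρ ^ a : ℝ) : ℂ) *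
      c j (ρ * m) x) * hm1
  refine ⟨main, fun s hs x hx => ?_⟩
  simpa using main x hx (s - (D - (L + 1 : ℝ))) (sub_pos.mpr hs)
end
end

section
/- Let D' ∈ ℝ, N ∈ ℕ, M>0, and let t^{(m)}, l_1^{(m)}, …, l_N^{(m)} : ℝᵏ∖{0} → ℂ (m>0) be families satisfying the identity ρ^{D'} t^{(m)}(ρx) = t^{(ρm)}(x) + Σ_{k=1}^{N} l_k^{(ρm)}(x) (log ρ)^k for all ρ>0, m>0 and x≠0. Assume that lim_{m↓0} (m/M)^{ε} t^{(m)}(x) = 0 for every ε>0 and every x≠0. Then also lim_{m↓0} (m/M)^{ε} l_k^{(m)}(x) = 0 for every ε>0, every k ∈ {1,…,N} and every x≠0. -/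
/-!
For fixed `x`, set `μ = ρ m`. The scaling identity says that the polynomial in `log ρ` with
coefficients `t^{(μ)}(x), l_1^{(μ)}(x), …, l_N^{(μ)}(x)` takes the value
`ρ^{D'} t^{(μ/ρ)}(ρx)`. After multiplication by `(μ/M)^ε = ρ^ε ((μ/ρ)/M)^ε` this value tends to `0`
as `μ ↓ 0` for each fixed `ρ`. Evaluating at the `N + 1` distinct nodes
`log ρ = 0, 1, …, N` and inverting the Vandermonde matrix (`tendsto_coeff_of_tendsto_eval`)
shows that every coefficient, weighted by `(μ/M)^ε`, tends to `0`.
-/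

noncomputable section
open Filter Topology Finset

/-- If the values at `n` distinct nodes of a family of polynomials of degree `< n` tend to `0`,
then so do the coefficients. -/
theorem tendsto_coeff_of_tendsto_eval {α : Type*} {L : Filter α} {n : ℕ} (v : Fin n → ℂ)
    (hv : Function.Injective v) (F : α → Fin n → ℂ)
    (h : ∀ i, Tendsto (fun a => ∑ j : Fin n, v i ^ (j : ℕ) * F a j) L (𝓝 0)) (j : Fin n) :
    Tendsto (fun a => F a j) L (𝓝 0) := by
  have hdet : IsUnit (Matrix.vandermonde v).det :=
    isUnit_iff_ne_zero.mpr (Matrix.det_vandermonde_ne_zero_iff.mpr hv)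
  have h1 : Tendsto (fun a => (Matrix.vandermonde v).mulVec (F a)) L (𝓝 0) := by
    rw [tendsto_pi_nhds]
    intro i
    simpa [Matrix.mulVec, dotProduct, Matrix.vandermonde_apply] using h i
  have hc : Continuous fun w : Fin n → ℂ => (Matrix.vandermonde v)⁻¹.mulVec w :=
    continuous_const.matrix_mulVec continuous_id
  have h2 := (hc.tendsto 0).comp h1
  simp only [Function.comp_def, Matrix.mulVec_mulVec, Matrix.nonsing_inv_mul _ hdet,
    Matrix.one_mulVec, Matrix.mulVec_zero] at h2
  exact (tendsto_pi_nhds.mp h2) j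

/-- let the families `t^{(m)}, l_1^{(m)}, …, l_N^{(m)}` satisfy
`ρ^{D'} t^{(m)}(ρx) = t^{(ρm)}(x) + Σ_{k=1}^N l_k^{(ρm)}(x) (log ρ)^k` for all
`ρ > 0`, `m > 0`, `x ≠ 0`, and assume `lim_{m↓0} (m/M)^ε t^{(m)}(x) = 0` for every
`ε > 0` and `x ≠ 0`.  Then also `lim_{m↓0} (m/M)^ε l_k^{(m)}(x) = 0` for every
`ε > 0`, `1 ≤ k ≤ N` and `x ≠ 0`. -/
theorem log_coefficients_vanish (k : ℕ) (D' : ℝ) (N : ℕ) (hN : 1 ≤ N) (M : ℝ)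
    (hM : 0 < M) (t : ℝ → (Fin k → ℝ) → ℂ) (l : ℕ → ℝ → (Fin k → ℝ) → ℂ)
    (hident : ∀ ρ : ℝ, 0 < ρ → ∀ m : ℝ, 0 < m → ∀ x : Fin k → ℝ, x ≠ 0 →
      ((ρ ^ D' : ℝ) : ℂ) * t m (ρ • x)
        = t (ρ * m) x + ∑ j ∈ Finset.Icc 1 N, l j (ρ * m) x * (Real.log ρ : ℂ) ^ j)
    (ht : ∀ ε : ℝ, 0 < ε → ∀ x : Fin k → ℝ, x ≠ 0 →
      Tendsto (fun m : ℝ => (((m / M) ^ ε : ℝ) : ℂ) * t m x) (𝓝[>] (0 : ℝ)) (𝓝 0)) :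
    ∀ ε : ℝ, 0 < ε → ∀ j : ℕ, 1 ≤ j → j ≤ N → ∀ x : Fin k → ℝ, x ≠ 0 →
      Tendsto (fun m : ℝ => (((m / M) ^ ε : ℝ) : ℂ) * l j m x) (𝓝[>] (0 : ℝ)) (𝓝 0) := by
  intro ε hε j hj1 hjN x hx
  -- the coefficient of `(log ρ)^0` is `t` itself
  let c : ℕ → ℝ → ℂ := fun i m => if i = 0 then t m x else l i m x
  have key := tendsto_coeff_of_tendsto_eval (L := 𝓝[>] (0 : ℝ)) (n := N + 1)
    (fun i => ((i : ℕ) : ℂ)) (fun a b hab => Fin.ext (Nat.cast_injective hab))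
    (fun m i => (((m / M) ^ ε : ℝ) : ℂ) * c i m) ?_ ⟨j, by omega⟩
  · have hj0 : j ≠ 0 := by omega
    simpa [c, hj0] using key
  intro i
  -- the scale at which `log ρ` equals the `i`-th node
  set ρ : ℝ := Real.exp ((i : ℕ) : ℝ) with hρdef
  have hρ : 0 < ρ := Real.exp_pos _
  have hdiv : Tendsto (fun m : ℝ => m / ρ) (𝓝[>] (0 : ℝ)) (𝓝[>] (0 : ℝ)) := by
    refine tendsto_nhdsWithin_iff.mpr ⟨?_, ?_⟩
    · have : Tendsto (fun m : ℝ => m / ρ) (𝓝 0) (𝓝 (0 / ρ)) :=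
        (continuous_id.div_const ρ).tendsto 0
      rw [zero_div] at this
      exact this.mono_left nhdsWithin_le_nhds
    · filter_upwards [self_mem_nhdsWithin] with m hm
      exact div_pos hm hρ
  have hlim := ((ht ε hε (ρ • x) (smul_ne_zero hρ.ne' hx)).comp hdiv).const_mul
    (((ρ ^ ε : ℝ) : ℂ) * ((ρ ^ D' : ℝ) : ℂ))
  rw [mul_zero] at hlim
  refine hlim.congr' ?_
  filter_upwards [self_mem_nhdsWithin] with m hm
  have hm0 : 0 < m := hm
  have hid := hident ρ hρ (m / ρ) (div_pos hm0 hρ) x hx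
  rw [mul_div_cancel₀ m hρ.ne', hρdef, Real.log_exp, ← hρdef] at hid
  have hw : (m / M) ^ ε = ρ ^ ε * (m / ρ / M) ^ ε := by
    rw [← Real.mul_rpow hρ.le (by positivity)]
    congr 1
    field_simp
  have hsum : ∑ q : Fin (N + 1), ((i : ℕ) : ℂ) ^ (q : ℕ) * ((((m / M) ^ ε : ℝ) : ℂ) * c q m)
      = (((m / M) ^ ε : ℝ) : ℂ) *
        (t m x + ∑ q ∈ Finset.Icc 1 N, l q m x * (((i : ℕ) : ℝ) : ℂ) ^ q) := by
    rw [Fin.sum_univ_eq_sum_range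
      (fun q => ((i : ℕ) : ℂ) ^ q * ((((m / M) ^ ε : ℝ) : ℂ) * c q m)) (N + 1),
      Finset.range_eq_Ico, Finset.sum_eq_sum_Ico_succ_bot (by omega), mul_add, Finset.mul_sum]
    congr 1
    · simp [c]
    · refine Finset.sum_congr (by ext; simp) fun q hq => ?_
      have hq0 : q ≠ 0 := by
        have := (Finset.mem_Icc.mp hq).1
        omega
      simp only [c, hq0, if_false, Complex.ofReal_natCast]
      ring
  rw [hsum, ← hid, hw]
  simp only [Function.comp_apply, Complex.ofReal_mul]
  ring
end
end

section
/- Uniqueness of the almost homogeneous extension for non-exceptional degree (Proposition A.1(i), uniqueness part): let k ∈ ℕ, D ∈ ℂ with D − k ∉ ℕ₀, and let t, t' be tempered distributions on ℝᵏ which agree away from the origin and which both scale almost homogeneously with degree D (each with some finite power). Then t = t'. -/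
/-!
The difference `u = t - t'` annihilates every Schwartz function vanishing near `0`, and
`L ↦ exp ((D - k) L) * u (φ_{exp L})` is a polynomial in `L` for every `φ` (`ScalesPoly`).
One shows `u φ = 0` whenever all derivatives of `φ` of order `< m` vanish at `0`, by descending
induction on `m`; the case `m = 0` is the theorem.

* For large `m`, more precisely `m > Re (D - k)`: with a cutoff `χ` equal to `1` near `0` one has
  `u (φ_ρ) = u (χ φ_ρ)`, and Taylor's estimate shows that every Schwartz seminorm of `χ φ_ρ` is
  `O(ρ^{-m})` as `ρ → ∞`. So the polynomial above tends to `0` at infinity, hence is zero, and its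
  value at `L = 0` is `u φ` (`apply_eq_zero_of_flat`).
* From `m + 1` to `m`: the derivatives of `φ_ρ - ρ^{-m} φ` of order `≤ m` vanish at `0`, since
  those of `φ_ρ` of order `j` are `ρ^{-j}` times those of `φ`. So `u (φ_ρ) = ρ^{-m} u φ` for all
  `ρ > 0`, and `exp ((D - k - m) L) * u φ` is a polynomial in `L`. As `D - k ≠ m`, this forces
  `u φ = 0` (`eq_zero_of_exp_mul_eq_eval`).

This avoids the structure theorem for distributions supported at a point.
-/

noncomputable section
open Filter Topology Finset

/-- Tempered distributions on `ℝᵏ`: continuous `ℂ`-linear maps `𝓢(ℝᵏ, ℂ) → ℂ`. -/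
abbrev TemperedDist (k : ℕ) := SchwartzMap (Fin k → ℝ) ℂ →L[ℂ] ℂ

/-- For `ρ ≠ 0`, the Schwartz function `φ_ρ : x ↦ φ(x/ρ)` (junk value `φ` for `ρ = 0`;
it is only ever used for `ρ > 0`). -/
noncomputable def dilateSM {k : ℕ} (ρ : ℝ) (φ : SchwartzMap (Fin k → ℝ) ℂ) :
    SchwartzMap (Fin k → ℝ) ℂ :=
  if h : ρ ≠ 0 then
    SchwartzMap.compCLMOfContinuousLinearEquiv ℂ
      ((LinearEquiv.smulOfNeZero ℝ (Fin k → ℝ) ρ⁻¹ (inv_ne_zero h)).toContinuousLinearEquiv) φ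
  else φ

/-- `t` and `t'` agree away from the origin: `t(φ) = t'(φ)` for every Schwartz `φ`
vanishing on some neighborhood of `0`. -/
def AgreeAwayFromOrigin (k : ℕ) (t t' : TemperedDist k) : Prop :=
  ∀ φ : SchwartzMap (Fin k → ℝ) ℂ,
    (∃ U ∈ 𝓝 (0 : Fin k → ℝ), ∀ x ∈ U, φ x = 0) → t φ = t' φ

/-- A tempered distribution `t` scales almost homogeneously with degree `w` and some
finite power: for every Schwartz `φ` there are constants `c_j(φ)`, `c_0(φ) = t(φ)`,
with `ρ^{w-k} t(φ_ρ) = Σ_{j<N} (log ρ)^j c_j(φ)` for all `ρ > 0`. -/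
def ScalesAlmostHomogeneously (k : ℕ) (w : ℂ) (t : TemperedDist k) : Prop :=
  ∃ N : ℕ, 1 ≤ N ∧ ∀ φ : SchwartzMap (Fin k → ℝ) ℂ, ∃ c : ℕ → ℂ, c 0 = t φ ∧
    ∀ ρ : ℝ, 0 < ρ →
      Complex.exp ((w - (k : ℂ)) * Real.log ρ) * t (dilateSM ρ φ)
        = ∑ j ∈ Finset.range N, (Real.log ρ : ℂ) ^ j * c j

/-! ### Exponentials versus polynomials -/

/-- A nonconstant exponential is not a polynomial: differentiating lowers the degree of the right
side and only multiplies the left side by `a ≠ 0`. -/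
lemma eq_zero_of_exp_mul_eq_eval {a : ℂ} (ha : a ≠ 0) (n : ℕ) :
    ∀ (c : ℂ) (P : Polynomial ℂ), P.natDegree < n →
      (∀ L : ℝ, Complex.exp (a * L) * c = P.eval (L : ℂ)) → c = 0 := by
  induction n with
  | zero => intro c P h; omega
  | succ n ih =>
    intro c P hP h
    have hder : ∀ L : ℝ, Complex.exp (a * L) * (a * c) = P.derivative.eval (L : ℂ) := by
      intro L
      have h1 : HasDerivAt (fun x : ℝ => Complex.exp (a * x) * c)
          (Complex.exp (a * L) * (a * 1) * c) L :=
        ((((hasDerivAt_id (L : ℂ)).const_mul a).cexp).mul_const c).comp_ofReal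
      have h2 : HasDerivAt (fun x : ℝ => P.eval (x : ℂ)) (P.derivative.eval (L : ℂ)) L :=
        (P.hasDerivAt (L : ℂ)).comp_ofReal
      rw [funext h] at h1
      rw [← h1.unique h2]
      ring
    by_cases h0 : P.natDegree = 0
    · have hd : P.derivative = 0 := by
        rw [Polynomial.eq_C_of_natDegree_eq_zero h0, Polynomial.derivative_C]
      have := hder 0
      simpa [hd, ha] using this
    · have := ih (a * c) P.derivative
        (lt_of_lt_of_le (Polynomial.natDegree_derivative_lt h0) (by omega)) hder
      simpa [ha] using this

lemma poly_eq_zero_of_tendsto {P : Polynomial ℂ}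
    (h : Tendsto (fun L : ℝ => P.eval (L : ℂ)) atTop (𝓝 0)) : P = 0 := by
  by_cases hd : 0 < P.degree
  · have h1 : Tendsto (fun L : ℝ => ‖P.eval (L : ℂ)‖) atTop atTop := by
      apply P.tendsto_norm_atTop hd
      simpa using tendsto_abs_atTop_atTop
    exact absurd h.norm (not_tendsto_nhds_of_tendsto_atTop h1 _)
  · rw [Polynomial.eq_C_of_degree_le_zero (not_lt.mp hd)] at h ⊢
    simp only [Polynomial.eval_C] at h
    rw [tendsto_nhds_unique tendsto_const_nhds h, Polynomial.C_0]

/-! ### Dilations and flatness at the origin -/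

lemma dilateSM_coe {k : ℕ} {ρ : ℝ} (hρ : 0 < ρ) (φ : SchwartzMap (Fin k → ℝ) ℂ) :
    ⇑(dilateSM ρ φ) = fun x => φ (ρ⁻¹ • x) := by
  ext x
  simp [dilateSM, hρ.ne']

lemma dilateSM_one {k : ℕ} (φ : SchwartzMap (Fin k → ℝ) ℂ) : dilateSM 1 φ = φ := by
  ext x
  simp [dilateSM_coe one_pos]

lemma iteratedFDeriv_dilateSM {k : ℕ} {ρ : ℝ} (hρ : 0 < ρ) (φ : SchwartzMap (Fin k → ℝ) ℂ)
    (j : ℕ) (x : Fin k → ℝ) :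
    iteratedFDeriv ℝ j (dilateSM ρ φ) x = (ρ⁻¹) ^ j • iteratedFDeriv ℝ j φ (ρ⁻¹ • x) := by
  rw [dilateSM_coe hρ, iteratedFDeriv_comp_const_smul _ (φ.smooth j)]

/-- `φ` vanishes to order `m` at the origin: its derivatives of order `< m` are zero there. -/
def FlatAtZero {k : ℕ} (m : ℕ) (φ : SchwartzMap (Fin k → ℝ) ℂ) : Prop :=
  ∀ j < m, iteratedFDeriv ℝ j φ 0 = 0

/-- Taylor's estimate for the derivatives of a flat function. The truncated subtraction is
intended: for `j ≥ m` this is plain boundedness. -/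
lemma FlatAtZero.bound {k m : ℕ} {φ : SchwartzMap (Fin k → ℝ) ℂ} (h : FlatAtZero m φ) (j : ℕ) :
    ∃ C : ℝ, 0 ≤ C ∧ ∀ x, ‖iteratedFDeriv ℝ j φ x‖ ≤ C * ‖x‖ ^ (m - j) := by
  rcases le_or_gt m j with hj | hj
  · refine ⟨SchwartzMap.seminorm ℝ 0 j φ, apply_nonneg _ _, fun x => ?_⟩
    simpa [Nat.sub_eq_zero_of_le hj] using φ.norm_iteratedFDeriv_le_seminorm ℝ j x
  · obtain ⟨d, hd⟩ : ∃ d, m - j = d := ⟨_, rfl⟩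
    induction d generalizing j with
    | zero => omega
    | succ d ih =>
      have hC : ∃ C : ℝ, 0 ≤ C ∧ ∀ x, ‖iteratedFDeriv ℝ (j + 1) φ x‖ ≤ C * ‖x‖ ^ d := by
        rcases Nat.eq_zero_or_pos d with rfl | hd0
        · refine ⟨SchwartzMap.seminorm ℝ 0 (j + 1) φ, apply_nonneg _ _, fun x => ?_⟩
          simpa using φ.norm_iteratedFDeriv_le_seminorm ℝ (j + 1) x
        · have hd' : m - (j + 1) = d := by omega
          have := ih (j + 1) (by omega) hd'
          rwa [hd'] at this
      obtain ⟨C, hC0, hC⟩ := hC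
      refine ⟨C, hC0, fun x => ?_⟩
      have hdiff : Differentiable ℝ (iteratedFDeriv ℝ j φ) :=
        (φ.smooth ⊤).differentiable_iteratedFDeriv (by exact_mod_cast ENat.natCast_lt_top j)
      have := (convex_closedBall (0 : Fin k → ℝ) ‖x‖).norm_image_sub_le_of_norm_fderiv_le
        (𝕜 := ℝ) (f := iteratedFDeriv ℝ j φ) (C := C * ‖x‖ ^ d) (x := 0) (y := x)
        (fun y _ => hdiff y)
        (fun y hy => by
          rw [norm_fderiv_iteratedFDeriv]
          refine (hC y).trans ?_
          have : ‖y‖ ≤ ‖x‖ := by simpa using hy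
          gcongr)
        (by simp) (by simp)
      rw [h j hj, sub_zero, sub_zero] at this
      rw [hd, pow_succ, ← mul_assoc]
      exact this

/-- Subtracting `ρ^{-m} φ` from `φ_ρ` removes the derivative of order `m` at the origin. -/
lemma FlatAtZero.dilate_sub {k m : ℕ} {φ : SchwartzMap (Fin k → ℝ) ℂ} (h : FlatAtZero m φ)
    {ρ : ℝ} (hρ : 0 < ρ) :
    FlatAtZero (m + 1) (dilateSM ρ φ - (ρ⁻¹ ^ m : ℝ) • φ) := by
  intro j hj
  have e : ⇑(dilateSM ρ φ - (ρ⁻¹ ^ m : ℝ) • φ)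
      = ⇑(dilateSM ρ φ) - (ρ⁻¹ ^ m : ℝ) • ⇑φ := by
    ext x; simp
  have hsm : ContDiffAt ℝ j ((ρ⁻¹ ^ m : ℝ) • ⇑φ) 0 :=
    ((φ.smooth j).const_smul (ρ⁻¹ ^ m : ℝ)).contDiffAt
  rw [e, iteratedFDeriv_sub_apply ((dilateSM ρ φ).smooth j).contDiffAt hsm,
    iteratedFDeriv_const_smul_apply (φ.smooth j).contDiffAt, iteratedFDeriv_dilateSM hρ,
    smul_zero]
  rcases Nat.lt_succ_iff_lt_or_eq.mp hj with hj | rfl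
  · simp [h j hj]
  · simp

/-! ### Cutoff and decay -/

lemma exists_cutoff (k : ℕ) : ∃ χ : SchwartzMap (Fin k → ℝ) ℂ, ∀ᶠ x in 𝓝 0, χ x = 1 := by
  let f : ContDiffBump (0 : Fin k → ℝ) := ⟨1, 2, one_pos, one_lt_two⟩
  have hc : HasCompactSupport (Complex.ofRealCLM ∘ f) := f.hasCompactSupport.comp_left rfl
  refine ⟨hc.toSchwartzMap (Complex.ofRealCLM.contDiff.comp f.contDiff), ?_⟩
  filter_upwards [f.eventuallyEq_one] with x hx
  simp [hx]

/-- Every Schwartz seminorm of `χ φ_ρ` is `O(ρ^{-m})` if `φ` vanishes to order `m` at `0`. -/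
lemma FlatAtZero.seminorm_cutoff_le {k m : ℕ} {φ : SchwartzMap (Fin k → ℝ) ℂ}
    (h : FlatAtZero m φ) (χ : SchwartzMap (Fin k → ℝ) ℂ) (p n : ℕ) :
    ∃ C : ℝ, 0 ≤ C ∧ ∀ ρ : ℝ, 1 ≤ ρ →
      SchwartzMap.seminorm ℂ p n (SchwartzMap.smulLeftCLM ℂ χ (dilateSM ρ φ)) ≤ C * ρ⁻¹ ^ m := by
  choose C hC0 hC using h.bound
  refine ⟨∑ i ∈ Finset.range (n + 1), (n.choose i : ℝ) *
    SchwartzMap.seminorm ℝ (p + (m - (n - i))) i χ * C (n - i), ?_, ?_⟩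
  · exact Finset.sum_nonneg fun i _ =>
      mul_nonneg (mul_nonneg (by positivity) (apply_nonneg _ _)) (hC0 _)
  intro ρ hρ
  have hρ0 : 0 < ρ := by linarith
  have hs1 : ρ⁻¹ ≤ 1 := inv_le_one_of_one_le₀ hρ
  have hs0 : 0 ≤ ρ⁻¹ := by positivity
  -- For `j < m` the chain rule gives `ρ^{-j}` and flatness the remaining `ρ^{-(m-j)}`.
  have key : ∀ j x, ‖iteratedFDeriv ℝ j (dilateSM ρ φ) x‖ ≤ C j * ‖x‖ ^ (m - j) * ρ⁻¹ ^ m := by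
    intro j x
    rw [iteratedFDeriv_dilateSM hρ0, norm_smul, Real.norm_of_nonneg (by positivity)]
    calc ρ⁻¹ ^ j * ‖iteratedFDeriv ℝ j φ (ρ⁻¹ • x)‖
        ≤ ρ⁻¹ ^ j * (C j * ‖ρ⁻¹ • x‖ ^ (m - j)) := by gcongr; exact hC j _
      _ = C j * ‖x‖ ^ (m - j) * ρ⁻¹ ^ (j + (m - j)) := by
        rw [norm_smul, Real.norm_of_nonneg hs0, mul_pow, pow_add]; ring
      _ ≤ C j * ‖x‖ ^ (m - j) * ρ⁻¹ ^ m := by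
        have := hC0 j
        gcongr ?_ * ?_
        exact pow_le_pow_of_le_one hs0 hs1 (by omega)
  apply SchwartzMap.seminorm_le_bound
  · exact mul_nonneg (Finset.sum_nonneg fun i _ =>
      mul_nonneg (mul_nonneg (by positivity) (apply_nonneg _ _)) (hC0 _)) (by positivity)
  intro x
  rw [SchwartzMap.smulLeftCLM_apply χ.hasTemperateGrowth]
  have hle := norm_iteratedFDeriv_smul_le (𝕜 := ℝ) (χ.smooth n) ((dilateSM ρ φ).smooth n) x
    (n := n) le_rfl
  refine (mul_le_mul_of_nonneg_left hle (by positivity)).trans ?_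
  rw [Finset.mul_sum, Finset.sum_mul]
  refine Finset.sum_le_sum fun i _ => ?_
  have h1 := χ.le_seminorm ℝ (p + (m - (n - i))) i x
  have h2 := key (n - i) x
  have := hC0 (n - i)
  calc ‖x‖ ^ p * ((n.choose i : ℝ) * ‖iteratedFDeriv ℝ i χ x‖ *
        ‖iteratedFDeriv ℝ (n - i) (dilateSM ρ φ) x‖)
      ≤ ‖x‖ ^ p * ((n.choose i : ℝ) * ‖iteratedFDeriv ℝ i χ x‖ *
        (C (n - i) * ‖x‖ ^ (m - (n - i)) * ρ⁻¹ ^ m)) := by gcongr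
    _ = (n.choose i : ℝ) * (‖x‖ ^ (p + (m - (n - i))) * ‖iteratedFDeriv ℝ i χ x‖) *
        C (n - i) * ρ⁻¹ ^ m := by rw [pow_add]; ring
    _ ≤ _ := by gcongr

/-! ### The induction -/

/-- Almost homogeneous scaling with exponent `b` (standing for `D - k`), in the variable
`L = log ρ` and without a uniform bound on the power of the logarithm. -/
def ScalesPoly {k : ℕ} (b : ℂ) (u : TemperedDist k) : Prop :=
  ∀ φ, ∃ P : Polynomial ℂ, ∀ L : ℝ,
    Complex.exp (b * L) * u (dilateSM (Real.exp L) φ) = P.eval (L : ℂ)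

lemma ScalesAlmostHomogeneously.scalesPoly {k : ℕ} {D : ℂ} {t : TemperedDist k}
    (h : ScalesAlmostHomogeneously k D t) : ScalesPoly (D - k) t := by
  obtain ⟨N, -, h⟩ := h
  intro φ
  obtain ⟨c, -, hc⟩ := h φ
  refine ⟨∑ j ∈ Finset.range N, Polynomial.X ^ j * Polynomial.C (c j), fun L => ?_⟩
  have := hc (Real.exp L) (Real.exp_pos L)
  rw [Real.log_exp] at this
  rw [this, Polynomial.eval_finsetSum]
  exact Finset.sum_congr rfl fun j _ => by simp only [Polynomial.eval_mul, Polynomial.eval_pow,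
    Polynomial.eval_X, Polynomial.eval_C]

lemma ScalesPoly.sub {k : ℕ} {b : ℂ} {t t' : TemperedDist k}
    (h : ScalesPoly b t) (h' : ScalesPoly b t') : ScalesPoly b (t - t') := by
  intro φ
  obtain ⟨P, hP⟩ := h φ
  obtain ⟨Q, hQ⟩ := h' φ
  refine ⟨P - Q, fun L => ?_⟩
  rw [Polynomial.eval_sub, ← hP, ← hQ, sub_apply, mul_sub]

/-- The start of the induction: `u` kills functions vanishing at `0` to order beyond `Re b`. -/
lemma apply_eq_zero_of_flat {k m : ℕ} {b : ℂ} {u : TemperedDist k} (hu : ScalesPoly b u)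
    (h0 : AgreeAwayFromOrigin k u 0) (hm : b.re < m) {φ : SchwartzMap (Fin k → ℝ) ℂ}
    (hφ : FlatAtZero m φ) : u φ = 0 := by
  obtain ⟨χ, hχ⟩ := exists_cutoff k
  obtain ⟨P, hP⟩ := hu φ
  have hcut : ∀ ψ, u ψ = u (SchwartzMap.smulLeftCLM ℂ χ ψ) := by
    intro ψ
    rw [← sub_eq_zero, ← map_sub]
    refine h0 _ ⟨_, hχ, fun x hx => ?_⟩
    have hx' : χ x = 1 := hx
    simp [SchwartzMap.smulLeftCLM_apply_apply χ.hasTemperateGrowth, hx']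
  have hlim : Tendsto (fun L : ℝ => Complex.exp (b * L) •
      SchwartzMap.smulLeftCLM ℂ χ (dilateSM (Real.exp L) φ)) atTop (𝓝 0) := by
    rw [(schwartz_withSeminorms ℂ (Fin k → ℝ) ℂ).tendsto_nhds]
    rintro ⟨p, n⟩ ε hε
    obtain ⟨C, hC0, hC⟩ := hφ.seminorm_cutoff_le χ p n
    have hexp : Tendsto (fun L : ℝ => C * Real.exp (-((m - b.re) * L))) atTop (𝓝 0) := by
      have : Tendsto (fun L : ℝ => (m - b.re) * L) atTop atTop :=
        tendsto_id.const_mul_atTop (by linarith)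
      simpa using (Real.tendsto_exp_neg_atTop_nhds_zero.comp this).const_mul C
    filter_upwards [hexp.eventually_lt_const hε, eventually_ge_atTop 0] with L hL hL0
    refine lt_of_le_of_lt ?_ hL
    rw [sub_zero, SchwartzMap.schwartzSeminormFamily_apply, map_smul_eq_mul, Complex.norm_exp]
    have := hC (Real.exp L) (Real.one_le_exp hL0)
    calc Real.exp (b * L).re * _ ≤ Real.exp (b * L).re * (C * (Real.exp L)⁻¹ ^ m) := by gcongr
      _ = C * Real.exp (-((m - b.re) * L)) := by
        rw [← Real.exp_neg, ← Real.exp_nat_mul, mul_left_comm, ← Real.exp_add]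
        congr 2
        simp
        ring
  have hPlim : Tendsto (fun L : ℝ => P.eval (L : ℂ)) atTop (𝓝 0) := by
    have h1 := (u.continuous.tendsto 0).comp hlim
    rw [map_zero] at h1
    refine h1.congr fun L => ?_
    rw [Function.comp_apply, map_smul, ← hcut, smul_eq_mul, hP]
  have := hP 0
  simpa [poly_eq_zero_of_tendsto hPlim, dilateSM_one] using this

/-- The induction step, lowering the required order of vanishing by one. -/
lemma apply_eq_zero_of_flat_step {k m : ℕ} {b : ℂ} {u : TemperedDist k} (hu : ScalesPoly b u)
    (hb : b ≠ m) (ih : ∀ φ, FlatAtZero (m + 1) φ → u φ = 0)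
    {φ : SchwartzMap (Fin k → ℝ) ℂ} (hφ : FlatAtZero m φ) : u φ = 0 := by
  obtain ⟨P, hP⟩ := hu φ
  refine eq_zero_of_exp_mul_eq_eval (sub_ne_zero.mpr hb) (P.natDegree + 1) _ P (by omega)
    fun L => ?_
  have h1 := ih _ (hφ.dilate_sub (Real.exp_pos L))
  have h2 : ((Real.exp L)⁻¹ ^ m : ℝ) • φ = (((Real.exp L)⁻¹ ^ m : ℝ) : ℂ) • φ := by
    ext x; simp
  rw [map_sub, h2, map_smul, sub_eq_zero] at h1
  rw [← hP, h1, smul_eq_mul, ← mul_assoc]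
  congr 1
  rw [← Real.exp_neg, ← Real.exp_nat_mul, Complex.ofReal_exp, ← Complex.exp_add]
  congr 1
  push_cast
  ring

/-- uniqueness of the almost homogeneous extension for non-exceptional
degree.  If `D - k ∉ ℕ₀` and the tempered distributions `t, t'` agree away from the
origin and both scale almost homogeneously with degree `D` (each with some finite
power), then `t = t'`. -/
theorem almostHomogeneous_extension_unique (k : ℕ) (hk : 0 < k) (D : ℂ)
    (hD : ∀ n : ℕ, D ≠ (k : ℂ) + (n : ℂ))
    (t t' : TemperedDist k) (hagree : AgreeAwayFromOrigin k t t')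
    (ht : ScalesAlmostHomogeneously k D t) (ht' : ScalesAlmostHomogeneously k D t') :
    t = t' := by
  have hu := ht.scalesPoly.sub ht'.scalesPoly
  have h0 : AgreeAwayFromOrigin k (t - t') 0 := fun φ hφ => by simp [hagree φ hφ]
  obtain ⟨M, hM⟩ := exists_nat_gt (D - k).re
  have key : ∀ φ, FlatAtZero 0 φ → (t - t') φ = 0 := by
    refine Nat.decreasingInduction (motive := fun m _ => ∀ φ, FlatAtZero m φ → (t - t') φ = 0)
      (fun m _ ih φ hφ => ?_) (fun φ hφ => apply_eq_zero_of_flat hu h0 hM hφ) (Nat.zero_le M)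
    refine apply_eq_zero_of_flat_step hu (fun h => hD m ?_) ih hφ
    rw [← h]; ring
  ext φ
  exact sub_eq_zero.mp (key φ fun j hj => absurd hj (Nat.not_lt_zero j))
end
end

section
/- Taylor subtraction at zero momentum preserves almost homogeneous scaling (scaling property of the central solution): let k ∈ ℕ, ω ∈ ℕ₀, N ∈ ℕ, and let f : (0,∞) × ℝᵏ → ℂ be such that p ↦ f(m,p) is smooth for every m>0. Suppose there exist functions c_0, …, c_{N−1} : (0,∞) × ℝᵏ → ℂ, with c_0 = f and with p ↦ c_j(m,p) smooth for every m>0, such that ρ^{ω} f(m/ρ, p/ρ) = Σ_{j=0}^{N−1} (log ρ)^j c_j(m,p) for all ρ>0, m>0, p ∈ ℝᵏ. Define the Taylor-subtracted function g(m,p) := f(m,p) − Σ_{|β| ≤ ω} (p^β / β!) (∂_p^β f)(m,0), the sum running over multi-indices β ∈ ℕ₀ᵏ with |β| ≤ ω. Then there exist functions d_0, …, d_{N−1} : (0,∞) × ℝᵏ → ℂ with d_0 = g such that ρ^{ω} g(m/ρ, p/ρ) = Σ_{j=0}^{N−1} (log ρ)^j d_j(m,p) for all ρ>0, m>0, p ∈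 ℝᵏ. -/
/-!
The Taylor subtraction operator is linear in `f(m,·)` and commutes with dilations: for
`F(p) = a f(s p)` one has `∂^β F (p) = a s^{|β|} (∂^β f)(s p)` (`multiPderiv_comp_smul`), and
the factor `s^{|β|}` is exactly the one produced by `(s p)^β`. Applying `∂^β` at `p = 0` to the
scaling relation, with `a = ρ^ω` and `s = ρ⁻¹`, and using linearity of `∂^β` on smooth functions
(`multiPderiv_sum`) shows that `ρ^ω ρ^{-|β|} (∂^β f)(m/ρ, 0) = Σ_j (log ρ)^j (∂^β c_j)(m, 0)`.
Hence the Taylor-subtracted `c_j` serve as the coefficients `d_j`.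
-/

noncomputable section
open Filter Topology Finset

/-- Partial derivative in the `i`-th coordinate direction (as a plain operation on
functions, via the Fréchet derivative). -/
noncomputable def pderivP {k : ℕ} (i : Fin k) (f : (Fin k → ℝ) → ℂ) :
    (Fin k → ℝ) → ℂ :=
  fun x => fderiv ℝ f x (Pi.single i (1 : ℝ))

/-- The iterated partial derivative `∂^β` for a multi-index `β ∈ ℕ₀ᵏ`. -/
noncomputable def multiPderiv {k : ℕ} (β : Fin k → ℕ) (f : (Fin k → ℝ) → ℂ) :
    (Fin k → ℝ) → ℂ :=
  ((List.ofFn fun i : Fin k => (pderivP i)^[β i]).foldr (· ∘ ·) id) f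

/-- The (finite) set of multi-indices `β ∈ ℕ₀ᵏ` with `|β| ≤ ω`. -/
def multiIdxLe (k ω : ℕ) : Finset (Fin k → ℕ) :=
  (Fintype.piFinset fun _ : Fin k => Finset.range (ω + 1)).filter fun β => ∑ i, β i ≤ ω

theorem multiPderiv_eq_foldr {k : ℕ} (β : Fin k → ℕ) (F : (Fin k → ℝ) → ℂ) :
    multiPderiv β F
      = (((List.finRange k).map fun i => (pderivP i)^[β i]).foldr (· ∘ ·) id) F := by
  simp only [multiPderiv, List.ofFn_eq_map]

theorem contDiff_pderivP {k : ℕ} (i : Fin k) {F : (Fin k → ℝ) → ℂ}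
    (hF : ContDiff ℝ (⊤ : ℕ∞) F) : ContDiff ℝ (⊤ : ℕ∞) (pderivP i F) :=
  (hF.fderiv_right (m := (⊤ : ℕ∞)) (by simp)).clm_apply contDiff_const

theorem contDiff_iterate_pderivP {k : ℕ} (i : Fin k) (n : ℕ) {F : (Fin k → ℝ) → ℂ}
    (hF : ContDiff ℝ (⊤ : ℕ∞) F) : ContDiff ℝ (⊤ : ℕ∞) ((pderivP i)^[n] F) := by
  induction n with
  | zero => exact hF
  | succ n ih =>
    rw [Function.iterate_succ_apply']
    exact contDiff_pderivP i ih

theorem contDiff_foldr_pderivP {k : ℕ} (β : Fin k → ℕ) (l : List (Fin k))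
    {F : (Fin k → ℝ) → ℂ} (hF : ContDiff ℝ (⊤ : ℕ∞) F) :
    ContDiff ℝ (⊤ : ℕ∞) (((l.map fun i => (pderivP i)^[β i]).foldr (· ∘ ·) id) F) := by
  induction l with
  | nil => exact hF
  | cons i l ih => exact contDiff_iterate_pderivP i (β i) ih

theorem pderivP_sum {k : ℕ} (i : Fin k) (N : ℕ) (a : ℕ → ℂ) (F : ℕ → (Fin k → ℝ) → ℂ)
    (hF : ∀ j < N, ContDiff ℝ (⊤ : ℕ∞) (F j)) :
    pderivP i (fun p => ∑ j ∈ Finset.range N, a j * F j p)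
      = fun p => ∑ j ∈ Finset.range N, a j * pderivP i (F j) p := by
  funext p
  have hd : ∀ j ∈ Finset.range N, HasFDerivAt (fun p => a j * F j p)
      (a j • fderiv ℝ (F j) p) p := fun j hj =>
    (((hF j (Finset.mem_range.1 hj)).differentiable (by simp)) p).hasFDerivAt.const_mul (a j)
  simp [pderivP, (HasFDerivAt.fun_sum hd).fderiv]

theorem iterate_pderivP_sum {k : ℕ} (i : Fin k) (n N : ℕ) (a : ℕ → ℂ)
    (F : ℕ → (Fin k → ℝ) → ℂ) (hF : ∀ j < N, ContDiff ℝ (⊤ : ℕ∞) (F j)) :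
    (pderivP i)^[n] (fun p => ∑ j ∈ Finset.range N, a j * F j p)
      = fun p => ∑ j ∈ Finset.range N, a j * (pderivP i)^[n] (F j) p := by
  induction n with
  | zero => rfl
  | succ n ih =>
    simp only [Function.iterate_succ_apply']
    rw [ih, pderivP_sum i N a _ fun j hj => contDiff_iterate_pderivP i n (hF j hj)]

theorem multiPderiv_sum {k : ℕ} (β : Fin k → ℕ) (N : ℕ) (a : ℕ → ℂ)
    (F : ℕ → (Fin k → ℝ) → ℂ) (hF : ∀ j < N, ContDiff ℝ (⊤ : ℕ∞) (F j)) :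
    multiPderiv β (fun p => ∑ j ∈ Finset.range N, a j * F j p)
      = fun p => ∑ j ∈ Finset.range N, a j * multiPderiv β (F j) p := by
  simp only [multiPderiv_eq_foldr]
  induction List.finRange k with
  | nil => rfl
  | cons i l ih =>
    simp only [List.map_cons, List.foldr_cons, Function.comp_apply]
    rw [ih, iterate_pderivP_sum i (β i) N a _ fun j hj => contDiff_foldr_pderivP β l (hF j hj)]

theorem pderivP_comp_smul {k : ℕ} (i : Fin k) (a : ℂ) (s : ℝ) {F : (Fin k → ℝ) → ℂ}
    (hF : ContDiff ℝ (⊤ : ℕ∞) F) :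
    pderivP i (fun p => a * F (s • p)) = fun p => a * (s : ℂ) * pderivP i F (s • p) := by
  funext p
  have h1 : HasFDerivAt (fun p : Fin k → ℝ => s • p)
      (s • ContinuousLinearMap.id ℝ (Fin k → ℝ)) p := (hasFDerivAt_id p).const_smul s
  have h2 := ((hF.differentiable (by simp) (s • p)).hasFDerivAt.comp p h1).const_mul a
  have h3 : fderiv ℝ (fun p => a * F (s • p)) p = _ := h2.fderiv
  simp [pderivP, h3, mul_assoc]

theorem iterate_pderivP_comp_smul {k : ℕ} (i : Fin k) (n : ℕ) (a : ℂ) (s : ℝ)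
    {F : (Fin k → ℝ) → ℂ} (hF : ContDiff ℝ (⊤ : ℕ∞) F) :
    (pderivP i)^[n] (fun p => a * F (s • p))
      = fun p => a * (s : ℂ) ^ n * (pderivP i)^[n] F (s • p) := by
  induction n with
  | zero => simp
  | succ n ih =>
    simp only [Function.iterate_succ_apply']
    rw [ih, pderivP_comp_smul i _ s (contDiff_iterate_pderivP i n hF)]
    simp only [pow_succ, mul_assoc]

/-- Chain rule for dilations: `∂^β` turns `p ↦ a F(s p)` into `p ↦ a s^{|β|} (∂^β F)(s p)`. -/
theorem multiPderiv_comp_smul {k : ℕ} (β : Fin k → ℕ) (a : ℂ) (s : ℝ)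
    {F : (Fin k → ℝ) → ℂ} (hF : ContDiff ℝ (⊤ : ℕ∞) F) :
    multiPderiv β (fun p => a * F (s • p))
      = fun p => a * (∏ i, (s : ℂ) ^ β i) * multiPderiv β F (s • p) := by
  rw [← List.prod_ofFn, List.ofFn_eq_map]
  simp only [multiPderiv_eq_foldr]
  induction List.finRange k with
  | nil => simp
  | cons i l ih =>
    simp only [List.map_cons, List.foldr_cons, Function.comp_apply, List.prod_cons]
    rw [ih, iterate_pderivP_comp_smul i (β i) _ s (contDiff_foldr_pderivP β l hF)]
    funext p
    ring

/-- Taylor subtraction at zero momentum preserves almost homogeneous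
scaling.  Let `f(m,·)` be smooth for every `m > 0` and almost homogeneous with degree
`ω` under `(p,m) ↦ (p/ρ, m/ρ)`, in the form
`ρ^ω f(m/ρ, p/ρ) = Σ_{j<N} (log ρ)^j c_j(m,p)` with `c_0 = f` and each `c_j(m,·)`
smooth.  Then the Taylor-subtracted function
`g(m,p) := f(m,p) - Σ_{|β| ≤ ω} (p^β / β!) (∂_p^β f)(m,0)` satisfies the same kind of
relation: `ρ^ω g(m/ρ, p/ρ) = Σ_{j<N} (log ρ)^j d_j(m,p)` with `d_0 = g`. -/
theorem taylor_subtraction_preserves_scaling (k : ℕ) (ω : ℕ) (N : ℕ) (hN : 1 ≤ N)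
    (f : ℝ → (Fin k → ℝ) → ℂ)
    (hfsmooth : ∀ m : ℝ, 0 < m → ContDiff ℝ (⊤ : ℕ∞) (f m))
    (c : ℕ → ℝ → (Fin k → ℝ) → ℂ) (hc0 : c 0 = f)
    (hcsmooth : ∀ j : ℕ, j < N → ∀ m : ℝ, 0 < m → ContDiff ℝ (⊤ : ℕ∞) (c j m))
    (hscal : ∀ ρ : ℝ, 0 < ρ → ∀ m : ℝ, 0 < m → ∀ p : Fin k → ℝ,
      ((ρ ^ ω : ℝ) : ℂ) * f (m / ρ) (ρ⁻¹ • p)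
        = ∑ j ∈ Finset.range N, (Real.log ρ : ℂ) ^ j * c j m p) :
    ∃ d : ℕ → ℝ → (Fin k → ℝ) → ℂ,
      d 0 = (fun (m : ℝ) (p : Fin k → ℝ) => f m p - ∑ β ∈ multiIdxLe k ω,
        ((∏ i, (p i : ℂ) ^ β i) / (∏ i, (Nat.factorial (β i) : ℂ)))
          * multiPderiv β (f m) 0) ∧
      ∀ ρ : ℝ, 0 < ρ → ∀ m : ℝ, 0 < m → ∀ p : Fin k → ℝ,
        ((ρ ^ ω : ℝ) : ℂ) *
            ((fun (m' : ℝ) (p' : Fin k → ℝ) => f m' p' - ∑ β ∈ multiIdxLe k ω,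
              ((∏ i, (p' i : ℂ) ^ β i) / (∏ i, (Nat.factorial (β i) : ℂ)))
                * multiPderiv β (f m') 0) (m / ρ) (ρ⁻¹ • p))
          = ∑ j ∈ Finset.range N, (Real.log ρ : ℂ) ^ j * d j m p := by
  refine ⟨fun j m p => c j m p - ∑ β ∈ multiIdxLe k ω,
    ((∏ i, (p i : ℂ) ^ β i) / (∏ i, (Nat.factorial (β i) : ℂ))) * multiPderiv β (c j m) 0,
    by simp only [hc0], ?_⟩
  intro ρ hρ m hm p
  -- the scaling relation differentiated at zero momentum
  have key : ∀ β : Fin k → ℕ,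
      ((ρ ^ ω : ℝ) : ℂ) * (∏ i, ((ρ⁻¹ : ℝ) : ℂ) ^ β i) * multiPderiv β (f (m / ρ)) 0
        = ∑ j ∈ Finset.range N, (Real.log ρ : ℂ) ^ j * multiPderiv β (c j m) 0 := by
    intro β
    have h1 := multiPderiv_comp_smul β ((ρ ^ ω : ℝ) : ℂ) ρ⁻¹ (hfsmooth (m / ρ) (div_pos hm hρ))
    rw [funext (hscal ρ hρ m hm), multiPderiv_sum β N _ _ fun j hj => hcsmooth j hj m hm] at h1
    simpa using (congrFun h1 0).symm
  simp only [mul_sub, Finset.sum_sub_distrib, hscal ρ hρ m hm p, Finset.mul_sum]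
  congr 1
  rw [Finset.sum_comm]
  refine Finset.sum_congr rfl fun β _ => ?_
  have hp : ∏ i, (((ρ⁻¹ • p) i : ℝ) : ℂ) ^ β i
      = (∏ i, ((ρ⁻¹ : ℝ) : ℂ) ^ β i) * ∏ i, (p i : ℂ) ^ β i := by
    rw [← Finset.prod_mul_distrib]
    refine Finset.prod_congr rfl fun i _ => ?_
    rw [Pi.smul_apply, smul_eq_mul, Complex.ofReal_mul, mul_pow]
  calc _ = ((∏ i, (p i : ℂ) ^ β i) / (∏ i, (Nat.factorial (β i) : ℂ))) *
        (((ρ ^ ω : ℝ) : ℂ) * (∏ i, ((ρ⁻¹ : ℝ) : ℂ) ^ β i) * multiPderiv β (f (m / ρ)) 0) := by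
        rw [hp]; ring
    _ = _ := by
        rw [key β, Finset.mul_sum]
        exact Finset.sum_congr rfl fun j _ => by ring
end
end
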